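/- Let 0 < λ ≤ Λ, M > 0, β > 0, and let Ω ⊂ ℝ² be a bounded open set. Let G be a C² real-valued function on the space of 2×2 symmetric real matrices which is uniformly elliptic with constants λ, Λ, i.e. λ · tr N ≤ G(S + N) − G(S) ≤ Λ · tr N for every symmetric S and every symmetric positive semidefinite N. Let u be a smooth function on ℝ² ∖ closure(Ω) satisfying G(D²u(x)) = f(x) there, with sup_{ℝ² ∖ closure(Ω)} ‖D²u‖ ≤ M, and suppose f satisfies the decay condition D(β) relative to u. Then there exist a symmetric 2×2 real matrix A with G(A) = 0, a constant ε ∈ (0,1), and constants C > 0 and R₀ > 1 such that ‖D²u(x) − A‖ ≤ C |x|^{−ε} and |u(x) − ½ xᵀAx| ≤ C |x|^{2−ε} for all |x| ≥ R₀. -/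

import Mathlib

/-!
Let `p = u_k1` and `q = u_k2` be a row of the Hessian. Differentiating `G (D²u) = f` in the direction
`k` gives a linear elliptic equation for the second derivatives of `u_k`, and in two dimensions
ellipticity turns it into the pointwise inequality
`|∇p|² + |∇q|² ≤ K * (-det ∂(p, q)) + C * |x| ^ (-2β - 2)`
(`quasiregular_algebra`, `hess_row_quasiregular`); the error is the square of the derivative of `f`,
bounded by means of the decay condition (`decay_lip`). So `(p, q)` is a bounded quasiregular map up to
a decaying error, and such maps have limits at infinity with a power rate (`pair_limit`).

The limit is obtained from decay of the Dirichlet energy. In logarithmic polar coordinates `(s, θ)`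
the integral `I(s)` of `p * q_θ` over the circle with parameter `s` has as derivative the integral of
the Jacobian. A multiple of `I` plus an exponential error is therefore a function `Y` whose
derivative dominates the energy `D` of the circle. On the other hand `|I| ≤ π * D`, since `p` may be
replaced by its oscillation, and `I² ≤ 2π * M² * D`, since `p` is bounded. The second estimate is a
Riccati inequality: it makes `Y` nonnegative and bounds it at a fixed time; the first one is linear
and then gives exponential decay of `Y` (`ode_decay`, `cylinder`).

Small energy makes the circle means converge and the function nearly constant on well chosen circles
(`circle_limit`). Used around the origin, towards infinity, this yields the limit `L`; used around a
point `x`, towards `x`, it yields the value at `x`. A good circle around the origin and a good circle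
around `x` intersect, so the value at `x` is close to `L`.

Hence `D²u → A` with a power rate, `G A = 0` by continuity of `G` and decay of `f`, and
integrating `D²u - A` twice along rays gives the expansion of `u` (`quadratic_expansion`). As only
the behaviour near infinity matters, `u` is first replaced by a function with four continuous
derivatives on the whole plane (`exists_smooth_extension`).
-/

open Real MeasureTheory

noncomputable section

abbrev E2 : Type := EuclideanSpace ℝ (Fin 2)

/-- Entries of the Hessian matrix `D²u(x)`. -/
noncomputable def Hess (u : E2 → ℝ) (x : E2) : Matrix (Fin 2) (Fin 2) ℝ :=
  Matrix.of fun i j =>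
    iteratedFDeriv ℝ 2 u x ![EuclideanSpace.single i 1, EuclideanSpace.single j 1]

/-- The quadratic form `xᵀ A x`. -/
noncomputable def quadForm (A : Matrix (Fin 2) (Fin 2) ℝ) (x : E2) : ℝ :=
  ∑ i, ∑ j, A i j * x i * x j

/-- Hölder seminorm `[g]_{C^{0,a}(U)}`, valued in `ℝ≥0∞`. -/
noncomputable def hSemi {E F : Type*} [NormedAddCommGroup E] [NormedAddCommGroup F]
    (a : ℝ) (U : Set E) (g : E → F) : ENNReal :=
  ⨆ x ∈ U, ⨆ y ∈ U, ENNReal.ofReal (‖g x - g y‖ / ‖x - y‖ ^ a)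

/-- The decay condition `D(β)` of `f` relative to `u`. -/
def DecayCond (β : ℝ) (u f : E2 → ℝ) : Prop :=
  ∃ C₀ > (0:ℝ), ∃ R₀ > (0:ℝ), ∀ x : E2, R₀ ≤ ‖x‖ →
    ENNReal.ofReal ((‖x‖ + ‖gradient u x‖) ^ β * |f x|)
      + ENNReal.ofReal ((‖x‖ + ‖gradient u x‖) ^ (β + 1)) *
          hSemi 1 (Metric.ball x (‖x‖ / 2)) f
      ≤ ENNReal.ofReal C₀

/-! ### Ordinary differential inequalities on a half line -/

/-- A function with nonnegative derivative on `[a, b]` satisfies `F a ≤ F b`. -/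
lemma le_of_hasDerivAt_nonneg {F F' : ℝ → ℝ} {a b : ℝ} (hab : a ≤ b)
    (h : ∀ s ∈ Set.Icc a b, HasDerivAt F (F' s) s) (h0 : ∀ s ∈ Set.Icc a b, 0 ≤ F' s) :
    F a ≤ F b := by
  refine monotoneOn_of_deriv_nonneg (convex_Icc a b)
    (fun s hs => (h s hs).continuousAt.continuousWithinAt) ?_ ?_
    (Set.left_mem_Icc.2 hab) (Set.right_mem_Icc.2 hab) hab
  · intro s hs
    exact (h s (interior_subset hs)).differentiableAt.differentiableWithinAt
  · intro s hs
    rw [(h s (interior_subset hs)).deriv]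
    exact h0 s (interior_subset hs)

/-- A monotone `Y` on `(-∞, 0]`, whose square is controlled by its derivative where it is negative,
cannot be negative: otherwise `-A / Y` would be positive on a half line while having derivative at least `1`. -/
lemma ode_nonneg {A B μ : ℝ} (hA : 0 < A) (hB : 0 ≤ B) {Y Y' : ℝ → ℝ}
    (hY : ∀ s ≤ 0, HasDerivAt Y (Y' s) s) (hY0 : ∀ s ≤ 0, 0 ≤ Y' s)
    (hsq : ∀ s ≤ 0, (Y s - B * exp (μ * s)) ^ 2 ≤ A * Y' s) :
    ∀ s ≤ 0, 0 ≤ Y s := by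
  intro s₀ hs₀
  by_contra! hneg
  have hle : ∀ s ≤ s₀, Y s ≤ Y s₀ := fun s hs => le_of_hasDerivAt_nonneg hs
    (fun t ht => hY t (ht.2.trans hs₀)) (fun t ht => hY0 t (ht.2.trans hs₀))
  -- backwards in time, `-A / Y` would reach `0` by time `s₁`
  set s₁ := s₀ - (-A / Y s₀) with hs₁
  have hpos : 0 < -A / Y s₀ := div_pos_of_neg_of_neg (by linarith) hneg
  have h10 : s₁ ≤ s₀ := by linarith
  have key := le_of_hasDerivAt_nonneg (F := fun s => -A / Y s - s)
    (F' := fun s => (A * Y' s) / (Y s) ^ 2 - 1) h10 ?_ ?_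
  · have h1 : 0 < -A / Y s₁ :=
      div_pos_of_neg_of_neg (by linarith) ((hle s₁ h10).trans_lt hneg)
    linarith
  · intro t ht
    have hYt : Y t < 0 := (hle t ht.2).trans_lt hneg
    have := ((hasDerivAt_const t (-A)).div (hY t (ht.2.trans hs₀)) hYt.ne).sub (hasDerivAt_id t)
    refine HasDerivAt.congr_deriv this ?_
    simp
  · intro t ht
    have hYt : Y t < 0 := (hle t ht.2).trans_lt hneg
    have h2 := hsq t (ht.2.trans hs₀)
    have h3 : 0 ≤ B * exp (μ * t) := by positivity
    rw [sub_nonneg, le_div_iff₀ (sq_pos_of_neg hYt)]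
    nlinarith

/-- A universal bound: solutions of the Riccati inequality starting too high at `-1` blow up before
time `0`. -/
lemma ode_bound {A B μ : ℝ} (hA : 0 < A) (hB : 0 ≤ B) (hμ : 0 < μ) {Y Y' : ℝ → ℝ}
    (hY : ∀ s ≤ 0, HasDerivAt Y (Y' s) s) (hY0 : ∀ s ≤ 0, 0 ≤ Y' s)
    (hsq : ∀ s ≤ 0, (Y s - B * exp (μ * s)) ^ 2 ≤ A * Y' s) :
    Y (-1) ≤ A + B := by
  by_contra! hlt
  have hle : ∀ s ∈ Set.Icc (-1 : ℝ) 0, Y (-1) ≤ Y s := fun s hs => le_of_hasDerivAt_nonneg hs.1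
    (fun t ht => hY t (ht.2.trans hs.2)) (fun t ht => hY0 t (ht.2.trans hs.2))
  have key := le_of_hasDerivAt_nonneg (F := fun s => -A / (Y s - B) - s)
    (F' := fun s => (A * Y' s) / (Y s - B) ^ 2 - 1) (a := -1) (b := 0) (by norm_num) ?_ ?_
  · have h0 : 0 < Y 0 - B := by linarith [hle 0 (by simp)]
    have h1 : 0 < Y (-1) - B := by linarith
    have h2 : A / (Y (-1) - B) < 1 := by rw [div_lt_one h1]; linarith
    have h3 : 0 < A / (Y 0 - B) := by positivity
    simp only [neg_div] at key
    linarith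
  · intro t ht
    have hYt : 0 < Y t - B := by linarith [hle t ht]
    have := ((hasDerivAt_const t (-A)).div ((hY t ht.2).sub_const B) hYt.ne').sub (hasDerivAt_id t)
    refine HasDerivAt.congr_deriv this ?_
    simp
  · intro t ht
    have hYt : 0 < Y t - B := by linarith [hle t ht]
    have h2 := hsq t ht.2
    have h3 : exp (μ * t) ≤ 1 := by
      rw [exp_le_one_iff]; nlinarith [ht.2]
    have h4 : B * exp (μ * t) ≤ B := by nlinarith
    rw [sub_nonneg, le_div_iff₀ (by positivity)]
    nlinarith

/-- The growth lemma behind hole filling: a quantity controlled, up to an exponentially small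
error, both by its derivative and by the square root of its derivative decays exponentially at `-∞`.
The rate and the constant do not depend on the quantity. -/
lemma ode_decay {A B μ : ℝ} (hA : 0 < A) (hB : 0 ≤ B) (hμ : 0 < μ) :
    ∃ c > 0, ∃ C > 0, ∀ Y Y' : ℝ → ℝ,
      (∀ s ≤ 0, HasDerivAt Y (Y' s) s) → (∀ s ≤ 0, 0 ≤ Y' s) →
      (∀ s ≤ 0, |Y s - B * exp (μ * s)| ≤ A * Y' s) →
      (∀ s ≤ 0, (Y s - B * exp (μ * s)) ^ 2 ≤ A * Y' s) →
      ∀ s ≤ -1, 0 ≤ Y s ∧ Y s ≤ C * exp (c * s) := by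
  obtain ⟨c, hc0, hcA, hcμ⟩ : ∃ c > 0, c * A ≤ 1 ∧ c ≤ μ / 2 := by
    refine ⟨min (1 / A) (μ / 2), by positivity, ?_, min_le_right _ _⟩
    calc min (1 / A) (μ / 2) * A ≤ 1 / A * A := by gcongr; exact min_le_left _ _
      _ = 1 := by field_simp
  refine ⟨c, hc0, exp c * (A + B) + B, by positivity, ?_⟩
  intro Y Y' hY hY0 hlin hsq s hs
  refine ⟨ode_nonneg hA hB hY hY0 hsq s (by linarith), ?_⟩
  have hb := ode_bound hA hB hμ hY hY0 hsq
  have hd : 0 < μ - c := by linarith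
  -- `exp (-c * s) * Y s` is monotone up to a correction for the error term
  have key := le_of_hasDerivAt_nonneg
    (F := fun s => exp (-c * s) * Y s + c * B / (μ - c) * exp ((μ - c) * s))
    (F' := fun s => exp (-c * s) * (Y' s - c * Y s) + c * B * exp ((μ - c) * s)) hs ?_ ?_
  · have e1 : 0 ≤ c * B / (μ - c) * exp ((μ - c) * s) := by positivity
    have e2 : exp ((μ - c) * (-1)) ≤ 1 := by rw [exp_le_one_iff]; linarith
    have e3 : c * B / (μ - c) ≤ B := by
      rw [div_le_iff₀ hd]; nlinarith
    have e4 : c * B / (μ - c) * exp ((μ - c) * (-1)) ≤ B * 1 := by gcongr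
    have e5 : exp (-c * (-1)) * Y (-1) ≤ exp c * (A + B) := by
      rw [neg_mul_neg, mul_one]; gcongr
    have e6 : exp (-c * s) * Y s ≤ exp c * (A + B) + B := by linarith
    have e7 : Y s = exp (c * s) * (exp (-c * s) * Y s) := by
      rw [← mul_assoc, ← exp_add]; simp
    rw [e7, mul_comm _ (exp (c * s))]
    gcongr
  · intro t ht
    have h1 : HasDerivAt (fun s : ℝ => exp (-c * s)) (exp (-c * t) * (-c)) t := by
      simpa using ((hasDerivAt_id t).const_mul (-c)).exp
    have h2 : HasDerivAt (fun s : ℝ => exp ((μ - c) * s)) (exp ((μ - c) * t) * (μ - c)) t := by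
      simpa using ((hasDerivAt_id t).const_mul (μ - c)).exp
    have := (h1.mul (hY t (by linarith [ht.2]))).add (h2.const_mul (c * B / (μ - c)))
    refine HasDerivAt.congr_deriv this ?_
    have hd' := hd.ne'
    field_simp
    ring
  · intro t ht
    have ht0 : t ≤ 0 := by linarith [ht.2]
    have h1 := (le_abs_self _).trans (hlin t ht0)
    have h2 := hY0 t ht0
    have h3 : c * (Y t - B * exp (μ * t)) ≤ Y' t := by
      calc c * (Y t - B * exp (μ * t)) ≤ c * (A * Y' t) := by gcongr
        _ = (c * A) * Y' t := by ring
        _ ≤ 1 * Y' t := by gcongr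
        _ = Y' t := one_mul _
    have h4 : exp ((μ - c) * t) = exp (-c * t) * exp (μ * t) := by
      rw [← exp_add]; ring_nf
    rw [h4]
    have : 0 < exp (-c * t) := exp_pos _
    nlinarith

/-- A function whose derivative is dominated by that of a nonnegative `Z` on a half line has a
limit at `-∞`, at distance at most `Z`. -/
lemma exists_limit_of_deriv_le {m m' Z Z' : ℝ → ℝ}
    (hm : ∀ s ≤ -1, HasDerivAt m (m' s) s) (hZ : ∀ s ≤ -1, HasDerivAt Z (Z' s) s)
    (hmZ : ∀ s ≤ -1, |m' s| ≤ Z' s) (hZ0 : ∀ s ≤ -1, 0 ≤ Z s) :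
    ∃ L, ∀ s ≤ -1, |m s - L| ≤ Z s := by
  have hi : ∀ a b, a ≤ b → b ≤ -1 → m a + Z a ≤ m b + Z b := fun a b hab hb =>
    le_of_hasDerivAt_nonneg (F := fun s => m s + Z s) hab
      (fun t ht => (hm t (ht.2.trans hb)).add (hZ t (ht.2.trans hb)))
      (fun t ht => by linarith [(abs_le.1 (hmZ t (ht.2.trans hb))).1])
  have lo : ∀ a b, a ≤ b → b ≤ -1 → Z a - m a ≤ Z b - m b := fun a b hab hb =>
    le_of_hasDerivAt_nonneg (F := fun s => Z s - m s) hab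
      (fun t ht => (hZ t (ht.2.trans hb)).sub (hm t (ht.2.trans hb)))
      (fun t ht => by linarith [(abs_le.1 (hmZ t (ht.2.trans hb))).2])
  have cross : ∀ a b, a ≤ -1 → b ≤ -1 → m a - Z a ≤ m b + Z b := by
    intro a b ha hb
    have hc : min a b ≤ -1 := (min_le_left _ _).trans ha
    linarith [hi (min a b) b (min_le_right _ _) hb, lo (min a b) a (min_le_left _ _) ha,
      hZ0 _ hc]
  have hbdd : BddAbove ((fun a => m a - Z a) '' Set.Iic (-1)) := by
    refine ⟨m (-1) + Z (-1), ?_⟩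
    rintro _ ⟨a, ha, rfl⟩
    exact cross a (-1) ha le_rfl
  refine ⟨sSup ((fun a => m a - Z a) '' Set.Iic (-1)), fun s hs => ?_⟩
  have h1 := le_csSup hbdd (Set.mem_image_of_mem _ hs)
  have h2 : sSup ((fun a => m a - Z a) '' Set.Iic (-1)) ≤ m s + Z s := by
    refine csSup_le (Set.Nonempty.image _ ⟨-1, by simp⟩) ?_
    rintro _ ⟨a, ha, rfl⟩
    exact cross a s ha hs
  rw [abs_le]
  constructor <;> linarith

/-! ### Energy estimates on a half cylinder -/

lemma hasDerivAt_slice_fst {F : ℝ × ℝ → ℝ} (hF : ContDiff ℝ 1 F) (s θ : ℝ) :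
    HasDerivAt (fun s => F (s, θ)) (fderiv ℝ F (s, θ) (1, 0)) s := by
  have h1 := (hF.differentiable one_ne_zero (s, θ)).hasFDerivAt
  exact h1.comp_hasDerivAt s ((hasDerivAt_id s).prodMk (hasDerivAt_const s θ))

lemma hasDerivAt_slice_snd {F : ℝ × ℝ → ℝ} (hF : ContDiff ℝ 1 F) (s θ : ℝ) :
    HasDerivAt (fun θ => F (s, θ)) (fderiv ℝ F (s, θ) (0, 1)) θ := by
  have h1 := (hF.differentiable one_ne_zero (s, θ)).hasFDerivAt
  exact h1.comp_hasDerivAt θ ((hasDerivAt_const θ s).prodMk (hasDerivAt_id θ))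

lemma contDiff_fderiv_apply {E : Type*} [NormedAddCommGroup E] [NormedSpace ℝ E]
    {F : E → ℝ} (hF : ContDiff ℝ 2 F) (v : E) : ContDiff ℝ 1 (fun z => fderiv ℝ F z v) :=
  (hF.fderiv_right (m := 1) (by norm_num)).clm_apply contDiff_const

lemma continuous_fderiv_apply' {E : Type*} [NormedAddCommGroup E] [NormedSpace ℝ E]
    {F : E → ℝ} (hF : ContDiff ℝ 1 F) (v : E) : Continuous (fun z => fderiv ℝ F z v) :=
  (hF.continuous_fderiv one_ne_zero).clm_apply continuous_const

lemma fderiv_fderiv_comm {E : Type*} [NormedAddCommGroup E] [NormedSpace ℝ E]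
    {F : E → ℝ} (hF : ContDiff ℝ 2 F) (z v w : E) :
    fderiv ℝ (fun z => fderiv ℝ F z v) z w = fderiv ℝ (fun z => fderiv ℝ F z w) z v := by
  have hd : DifferentiableAt ℝ (fderiv ℝ F) z :=
    (hF.fderiv_right (m := 1) (by norm_num)).differentiable one_ne_zero z
  have h1 : ∀ v w, fderiv ℝ (fun z => fderiv ℝ F z v) z w = fderiv ℝ (fderiv ℝ F) z w v := by
    intro v w
    have := (hd.hasFDerivAt.clm_apply (hasFDerivAt_const v z)).fderiv
    rw [this]
    simp
  rw [h1, h1]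
  exact (hF.contDiffAt.isSymmSndFDerivAt (by simp)) w v

/-- Differentiation under the integral sign over circles. -/
lemma hasDerivAt_integral_slice {F : ℝ × ℝ → ℝ} (hF : ContDiff ℝ 1 F) (s : ℝ) :
    HasDerivAt (fun s => ∫ θ in -π..π, F (s, θ))
      (∫ θ in -π..π, fderiv ℝ F (s, θ) (1, 0)) s := by
  have hc := continuous_fderiv_apply' hF ((1, 0) : ℝ × ℝ)
  obtain ⟨b, hb⟩ := ((isCompact_Icc (a := s - 1) (b := s + 1)).prod
    (isCompact_Icc (a := -π) (b := π))).exists_bound_of_continuousOn hc.continuousOn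
  refine (intervalIntegral.hasDerivAt_integral_of_dominated_loc_of_deriv_le
    (F := fun s θ => F (s, θ)) (F' := fun s θ => fderiv ℝ F (s, θ) (1, 0))
    (bound := fun _ => b) (s := Set.Icc (s - 1) (s + 1)) (Icc_mem_nhds (by linarith) (by linarith))
    ?_ ?_ ?_ ?_ ?_ ?_).2
  · refine Filter.Eventually.of_forall fun t => ?_
    exact (hF.continuous.comp (by fun_prop : Continuous fun θ : ℝ => (t, θ))).aestronglyMeasurable
  · exact (hF.continuous.comp (by fun_prop : Continuous fun θ : ℝ => (s, θ))).intervalIntegrable _ _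
  · exact (hc.comp (by fun_prop : Continuous fun θ : ℝ => (s, θ))).aestronglyMeasurable
  · refine Filter.Eventually.of_forall fun θ hθ t ht => hb (t, θ) ⟨ht, ?_⟩
    rw [Set.uIoc_of_le (by linarith [pi_pos])] at hθ
    exact Set.Ioc_subset_Icc_self hθ
  · exact intervalIntegrable_const
  · exact Filter.Eventually.of_forall fun θ _ t _ => hasDerivAt_slice_fst hF t θ

/-- Cauchy-Schwarz on the circle. -/
lemma sq_integral_abs_le {g : ℝ → ℝ} (hg : Continuous g) :
    (∫ θ in -π..π, |g θ|) ^ 2 ≤ 2 * π * ∫ θ in -π..π, g θ ^ 2 := by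
  set I := ∫ θ in -π..π, |g θ| with hI
  have hpi := pi_pos
  have h0 : 0 ≤ ∫ θ in -π..π, (|g θ| - I / (2 * π)) ^ 2 :=
    intervalIntegral.integral_nonneg (by linarith) fun _ _ => sq_nonneg _
  have h1 : ∫ θ in -π..π, (|g θ| - I / (2 * π)) ^ 2
      = (∫ θ in -π..π, g θ ^ 2) - 2 * (I / (2 * π)) * I + 2 * π * (I / (2 * π)) ^ 2 := by
    have : ∀ θ, (|g θ| - I / (2 * π)) ^ 2
        = g θ ^ 2 - 2 * (I / (2 * π)) * |g θ| + (I / (2 * π)) ^ 2 := by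
      intro θ; rw [sub_sq, sq_abs]; ring
    simp_rw [this]
    rw [intervalIntegral.integral_add, intervalIntegral.integral_sub,
      intervalIntegral.integral_const_mul, intervalIntegral.integral_const]
    · simp only [smul_eq_mul]; ring
    all_goals exact Continuous.intervalIntegrable (by fun_prop) _ _
  rw [h1] at h0
  have h2 : (∫ θ in -π..π, g θ ^ 2) - 2 * (I / (2 * π)) * I + 2 * π * (I / (2 * π)) ^ 2
      = ((2 * π * ∫ θ in -π..π, g θ ^ 2) - I ^ 2) / (2 * π) := by
    field_simp; ring
  rw [h2] at h0
  have h3 := mul_nonneg h0 (show 0 ≤ 2 * π by positivity)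
  rw [div_mul_cancel₀ _ (by positivity)] at h3
  linarith

lemma abs_sub_le_integral_deriv {F : ℝ × ℝ → ℝ} (hF : ContDiff ℝ 1 F) (s : ℝ) {θ θ' : ℝ}
    (hθ : θ ∈ Set.Icc (-π) π) (hθ' : θ' ∈ Set.Icc (-π) π) :
    |F (s, θ) - F (s, θ')| ≤ ∫ θ in -π..π, |fderiv ℝ F (s, θ) (0, 1)| := by
  wlog h : θ' ≤ θ generalizing θ θ'
  · rw [abs_sub_comm]; exact this hθ' hθ (le_of_not_ge h)
  have hc : Continuous fun θ : ℝ => fderiv ℝ F (s, θ) (0, 1) :=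
    (continuous_fderiv_apply' hF (0, 1)).comp (by fun_prop : Continuous fun θ : ℝ => (s, θ))
  rw [← intervalIntegral.integral_eq_sub_of_hasDerivAt
    (fun x _ => hasDerivAt_slice_snd hF s x) (hc.intervalIntegrable _ _)]
  refine (intervalIntegral.abs_integral_le_integral_abs h).trans ?_
  exact intervalIntegral.integral_mono_interval hθ'.1 h hθ.2
    (Filter.Eventually.of_forall fun _ => abs_nonneg _) (hc.abs.intervalIntegrable _ _)

/-- Circle means of a function whose energy density on circles is bounded by `Y'`, where `Y` is
exponentially small, converge as `s → -∞`; in every interval `[S - h, S]` there is a circle on which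
the function itself is close to the limit. -/
lemma circle_limit {c C : ℝ} (hc : 0 < c) (hC : 0 < C) {W : ℝ × ℝ → ℝ} (hW : ContDiff ℝ 1 W)
    {Y Y' : ℝ → ℝ} (hY : ∀ s ≤ -1, HasDerivAt Y (Y' s) s)
    (hY0 : ∀ s ≤ -1, 0 ≤ Y s) (hYC : ∀ s ≤ -1, Y s ≤ C * exp (c * s))
    (hs : ∀ s ≤ -1, ∫ θ in -π..π, (fderiv ℝ W (s, θ) (1, 0)) ^ 2 ≤ Y' s)
    (ht : ∀ s ≤ -1, ∫ θ in -π..π, (fderiv ℝ W (s, θ) (0, 1)) ^ 2 ≤ Y' s) :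
    ∃ L, ∀ S ≤ -1, ∀ h, 0 < h → h ≤ 1 → ∃ s ∈ Set.Icc (S - h) S, ∀ θ ∈ Set.Icc (-π) π,
      |W (s, θ) - L| ≤ (√(2 * π * C) + (2 * π * C + 1 / c)) * exp (c / 2 * S) / √h := by
  have hpi := pi_pos
  have hc1 : ∀ s, Continuous fun θ : ℝ => fderiv ℝ W (s, θ) (1, 0) := fun s =>
    (continuous_fderiv_apply' hW (1, 0)).comp (by fun_prop : Continuous fun θ : ℝ => (s, θ))
  have hc2 : ∀ s, Continuous fun θ : ℝ => fderiv ℝ W (s, θ) (0, 1) := fun s =>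
    (continuous_fderiv_apply' hW (0, 1)).comp (by fun_prop : Continuous fun θ : ℝ => (s, θ))
  have hc0 : ∀ s, Continuous fun θ : ℝ => W (s, θ) := fun s =>
    hW.continuous.comp (by fun_prop : Continuous fun θ : ℝ => (s, θ))
  set Z : ℝ → ℝ := fun s => π * (Y s * exp (-(c / 2) * s) + C * exp (c / 2 * s))
    + 1 / c * exp (c / 2 * s) with hZ
  have hE : ∀ s, HasDerivAt (fun s : ℝ => exp (c / 2 * s)) (exp (c / 2 * s) * (c / 2)) s := by
    intro s
    simpa using ((hasDerivAt_id s).const_mul (c / 2)).exp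
  have hE' : ∀ s, HasDerivAt (fun s : ℝ => exp (-(c / 2) * s)) (exp (-(c / 2) * s) * (-(c / 2))) s := by
    intro s
    simpa using ((hasDerivAt_id s).const_mul (-(c / 2))).exp
  have hsplit : ∀ s, exp (c * s) * exp (-(c / 2) * s) = exp (c / 2 * s) := by
    intro s; rw [← exp_add]; ring_nf
  have hcancel : ∀ s, exp (c / 2 * s) * exp (-(c / 2) * s) = 1 := by
    intro s; rw [← exp_add]; simp
  have hZbd : ∀ s ≤ -1, Z s ≤ (2 * π * C + 1 / c) * exp (c / 2 * s) := by
    intro s hs1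
    have : Y s * exp (-(c / 2) * s) ≤ C * exp (c / 2 * s) := by
      rw [← hsplit, ← mul_assoc]
      exact mul_le_mul_of_nonneg_right (hYC s hs1) (exp_pos _).le
    simp only [hZ]
    nlinarith
  obtain ⟨L, hL⟩ := exists_limit_of_deriv_le
    (m := fun s => ∫ θ in -π..π, W (s, θ)) (m' := fun s => ∫ θ in -π..π, fderiv ℝ W (s, θ) (1, 0))
    (Z := Z) (fun s _ => hasDerivAt_integral_slice hW s)
    (fun s hs1 => ((((hY s hs1).mul (hE' s)).add ((hE s).const_mul C)).const_mul π).add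
      ((hE s).const_mul (1 / c)))
    (by
      intro s hs1
      have h1 : |∫ θ in -π..π, fderiv ℝ W (s, θ) (1, 0)|
          ≤ ∫ θ in -π..π, |fderiv ℝ W (s, θ) (1, 0)| :=
        intervalIntegral.abs_integral_le_integral_abs (by linarith)
      set x := ∫ θ in -π..π, |fderiv ℝ W (s, θ) (1, 0)|
      have h2 : x ^ 2 ≤ 2 * π * Y' s :=
        (sq_integral_abs_le (hc1 s)).trans (by gcongr; exact hs s hs1)
      have h3 := hYC s hs1
      have e1 := hsplit s
      have e2 := hcancel s
      have p1 : 0 < exp (c / 2 * s) := exp_pos _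
      have p2 : 0 < exp (-(c / 2) * s) := exp_pos _
      -- Young's inequality with weight `exp (-(c / 2) * s)`
      have h4 : 2 * x ≤ x ^ 2 * exp (-(c / 2) * s) + exp (c / 2 * s) := by
        have h5 : 0 ≤ (x * exp (-(c / 2) * s) - 1) ^ 2 * exp (c / 2 * s) := by positivity
        have h6 : (x * exp (-(c / 2) * s) - 1) ^ 2 * exp (c / 2 * s)
          = x ^ 2 * exp (-(c / 2) * s) * (exp (c / 2 * s) * exp (-(c / 2) * s))
            - 2 * x * (exp (c / 2 * s) * exp (-(c / 2) * s)) + exp (c / 2 * s) := by ring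
        rw [h6, e2] at h5
        linarith
      have h7 : x ^ 2 * exp (-(c / 2) * s) ≤ 2 * π * Y' s * exp (-(c / 2) * s) := by gcongr
      have h8 : Y s * exp (-(c / 2) * s) ≤ C * exp (c / 2 * s) := by
        rw [← e1, ← mul_assoc]; gcongr
      have h9 : 1 / c * (exp (c / 2 * s) * (c / 2)) = exp (c / 2 * s) / 2 := by
        field_simp
      rw [h9]
      have h10 : π * (c / 2) * (Y s * exp (-(c / 2) * s)) ≤ π * (c / 2) * (C * exp (c / 2 * s)) := by
        gcongr
      linarith)
    (by
      intro s hs1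
      have := hY0 s hs1
      positivity)
  refine ⟨L / (2 * π), fun S hS h hh hh1 => ?_⟩
  -- a circle on which the energy is at most its average over `[S - h, S]`
  obtain ⟨s, hsI, hsY⟩ := exists_hasDerivAt_eq_slope Y Y' (show S - h < S by linarith)
    (fun x hx => (hY x (hx.2.trans hS)).continuousAt.continuousWithinAt)
    (fun x hx => hY x (hx.2.le.trans hS))
  have hs1 : s ≤ -1 := hsI.2.le.trans hS
  refine ⟨s, Set.Ioo_subset_Icc_self hsI, fun θ hθ => ?_⟩
  have hY's : Y' s ≤ C * exp (c * S) / h := by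
    rw [hsY, sub_sub_cancel]
    gcongr
    linarith [hYC S hS, hY0 (S - h) (by linarith)]
  set o := ∫ θ in -π..π, |fderiv ℝ W (s, θ) (0, 1)|
  have ho : o ≤ √(2 * π * C) * (exp (c / 2 * S) / √h) := by
    have h2 : o ^ 2 ≤ 2 * π * (C * exp (c * S) / h) :=
      (sq_integral_abs_le (hc2 s)).trans (by gcongr; exact (ht s hs1).trans hY's)
    refine (le_sqrt_of_sq_le h2).trans (le_of_eq ?_)
    rw [show 2 * π * (C * exp (c * S) / h) = 2 * π * C * (exp (c * S) / h) by ring,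
      sqrt_mul (by positivity), sqrt_div (exp_pos _).le,
      show exp (c * S) = exp (c / 2 * S) ^ 2 by rw [sq, ← exp_add]; ring_nf,
      sqrt_sq (exp_pos _).le]
  have hmean : |2 * π * W (s, θ) - ∫ θ' in -π..π, W (s, θ')| ≤ 2 * π * o := by
    have e1 : 2 * π * W (s, θ) - ∫ θ' in -π..π, W (s, θ')
        = ∫ θ' in -π..π, (W (s, θ) - W (s, θ')) := by
      rw [intervalIntegral.integral_sub intervalIntegrable_const
        ((hc0 s).intervalIntegrable _ _), intervalIntegral.integral_const, smul_eq_mul]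
      ring
    have e2 := intervalIntegral.norm_integral_le_of_norm_le_const (a := -π) (b := π) (C := o)
      (f := fun θ' => W (s, θ) - W (s, θ')) (by
        intro θ' hθ'
        rw [Set.uIoc_of_le (by linarith)] at hθ'
        exact abs_sub_le_integral_deriv hW s hθ (Set.Ioc_subset_Icc_self hθ'))
    rw [e1, ← norm_eq_abs]
    refine e2.trans (le_of_eq ?_)
    rw [abs_of_pos (by linarith)]; ring
  have hLs := hL s hs1
  have hZs := hZbd s hs1
  have hexp : exp (c / 2 * s) ≤ exp (c / 2 * S) / √h := by
    have h1 : exp (c / 2 * s) ≤ exp (c / 2 * S) := by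
      gcongr; exact hsI.2.le
    rw [le_div_iff₀ (sqrt_pos.2 hh)]
    have : √h ≤ 1 := sqrt_le_one.2 hh1
    nlinarith [exp_pos (c / 2 * s)]
  have hpi1 : 1 ≤ 2 * π := by linarith [pi_gt_three]
  have hfin : |2 * π * W (s, θ) - L| ≤ 2 * π * o + Z s := by
    calc _ = |(2 * π * W (s, θ) - ∫ θ' in -π..π, W (s, θ'))
          + ((∫ θ' in -π..π, W (s, θ')) - L)| := by ring_nf
      _ ≤ _ := (abs_add_le _ _).trans (add_le_add hmean hLs)
  have hdiv : |W (s, θ) - L / (2 * π)| = |2 * π * W (s, θ) - L| / (2 * π) := by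
    rw [← abs_of_pos (show 0 < 2 * π by positivity), ← abs_div,
      abs_of_pos (show 0 < 2 * π by positivity)]
    congr 1; field_simp
  rw [hdiv, div_le_iff₀ (by positivity)]
  have hK : 0 ≤ 2 * π * C + 1 / c := by positivity
  have hEp : 0 ≤ exp (c / 2 * S) / √h := by positivity
  calc _ ≤ 2 * π * o + Z s := hfin
    _ ≤ 2 * π * (√(2 * π * C) * (exp (c / 2 * S) / √h))
        + (2 * π * C + 1 / c) * (exp (c / 2 * S) / √h) := by
      gcongr
      exact hZs.trans (by gcongr)
    _ ≤ 2 * π * (√(2 * π * C) * (exp (c / 2 * S) / √h))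
        + 2 * π * ((2 * π * C + 1 / c) * (exp (c / 2 * S) / √h)) := by
      exact add_le_add le_rfl (le_mul_of_one_le_left (by positivity) hpi1)
    _ = _ := by ring

/-- Decay of a pair of functions on the half cylinder `s ≤ 0` satisfying a perturbed quasiregularity
inequality. With `I` the integral of `P * ∂Q/∂θ` over circles, the function `Y = K * I + (error)` has a
derivative dominating the energy on circles, while `I` is bounded both by a multiple of the energy
(`P` may be replaced by its oscillation) and by a multiple of its square root (`P` is bounded), so that
`ode_decay` applies to `Y`. -/
lemma cylinder {M K C μ : ℝ} (hM : 0 < M) (hK : 0 < K) (hC : 0 < C) (hμ : 0 < μ) :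
    ∃ c > 0, ∃ C' > 0, ∀ P Q : ℝ × ℝ → ℝ, ContDiff ℝ 2 P → ContDiff ℝ 2 Q →
      (∀ s θ, P (s, θ + 2 * π) = P (s, θ)) → (∀ s θ, Q (s, θ + 2 * π) = Q (s, θ)) →
      (∀ s ≤ 0, ∀ θ, |P (s, θ)| ≤ M) →
      (∀ s ≤ 0, ∀ θ, fderiv ℝ P (s, θ) (1, 0) ^ 2 + fderiv ℝ P (s, θ) (0, 1) ^ 2
          + fderiv ℝ Q (s, θ) (1, 0) ^ 2 + fderiv ℝ Q (s, θ) (0, 1) ^ 2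
        ≤ K * (fderiv ℝ P (s, θ) (1, 0) * fderiv ℝ Q (s, θ) (0, 1)
            - fderiv ℝ P (s, θ) (0, 1) * fderiv ℝ Q (s, θ) (1, 0)) + C * exp (μ * s)) →
      ∀ W, (W = P ∨ W = Q) →
        ∃ L, ∀ S ≤ -1, ∀ h, 0 < h → h ≤ 1 → ∃ s ∈ Set.Icc (S - h) S, ∀ θ ∈ Set.Icc (-π) π,
          |W (s, θ) - L| ≤ C' * exp (c * S) / √h := by
  have hpi := pi_pos
  set B := 2 * π * C / μ with hB
  have hB0 : 0 ≤ B := by positivity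
  set A := K * π + K ^ 2 * M ^ 2 * (2 * π) with hA
  have hA0 : 0 < A := by positivity
  obtain ⟨c, hc, C₁, hC₁, hode⟩ := ode_decay hA0 hB0 hμ
  refine ⟨c / 2, by positivity, √(2 * π * C₁) + (2 * π * C₁ + 1 / c), by positivity, ?_⟩
  intro P Q hP hQ hPp hQp hPM hineq W hW
  have hP1 : ContDiff ℝ 1 P := hP.of_le (by norm_num)
  have hQ1 : ContDiff ℝ 1 Q := hQ.of_le (by norm_num)
  have slice : ∀ s : ℝ, Continuous fun θ : ℝ => (s, θ) := fun s => by fun_prop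
  have cP : ∀ s, Continuous fun θ : ℝ => P (s, θ) := fun s => hP1.continuous.comp (slice s)
  have cPs : ∀ s, Continuous fun θ : ℝ => fderiv ℝ P (s, θ) (1, 0) := fun s =>
    (continuous_fderiv_apply' hP1 (1, 0)).comp (slice s)
  have cPt : ∀ s, Continuous fun θ : ℝ => fderiv ℝ P (s, θ) (0, 1) := fun s =>
    (continuous_fderiv_apply' hP1 (0, 1)).comp (slice s)
  have cQs : ∀ s, Continuous fun θ : ℝ => fderiv ℝ Q (s, θ) (1, 0) := fun s =>
    (continuous_fderiv_apply' hQ1 (1, 0)).comp (slice s)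
  have cQt : ∀ s, Continuous fun θ : ℝ => fderiv ℝ Q (s, θ) (0, 1) := fun s =>
    (continuous_fderiv_apply' hQ1 (0, 1)).comp (slice s)
  have hQt1 := contDiff_fderiv_apply hQ ((0, 1) : ℝ × ℝ)
  have hQs1 := contDiff_fderiv_apply hQ ((1, 0) : ℝ × ℝ)
  have cQst : ∀ s, Continuous fun θ : ℝ =>
      fderiv ℝ (fun z => fderiv ℝ Q z (0, 1)) (s, θ) (1, 0) := fun s =>
    (continuous_fderiv_apply' hQt1 (1, 0)).comp (slice s)
  -- `I` is the boundary integral whose derivative is the integral of the Jacobian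
  set I : ℝ → ℝ := fun s => ∫ θ in -π..π, P (s, θ) * fderiv ℝ Q (s, θ) (0, 1) with hI
  set J : ℝ → ℝ := fun s => ∫ θ in -π..π, (fderiv ℝ P (s, θ) (1, 0) * fderiv ℝ Q (s, θ) (0, 1)
            - fderiv ℝ P (s, θ) (0, 1) * fderiv ℝ Q (s, θ) (1, 0)) with hJ
  have hIJ : ∀ s, HasDerivAt I (J s) s := by
    intro s
    refine HasDerivAt.congr_deriv (hasDerivAt_integral_slice (hP1.mul hQt1) s) ?_
    have e1 : ∀ θ, fderiv ℝ (fun z => P z * fderiv ℝ Q z (0, 1)) (s, θ) (1, 0)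
        = fderiv ℝ P (s, θ) (1, 0) * fderiv ℝ Q (s, θ) (0, 1)
          + P (s, θ) * fderiv ℝ (fun z => fderiv ℝ Q z (0, 1)) (s, θ) (1, 0) := by
      intro θ
      have := ((hP1.differentiable one_ne_zero (s, θ)).hasFDerivAt.mul
        (hQt1.differentiable one_ne_zero (s, θ)).hasFDerivAt).fderiv
      rw [show (fun z => P z * fderiv ℝ Q z (0, 1)) = P * (fun z => fderiv ℝ Q z (0, 1)) from rfl,
        this]
      simp; ring
    have parts := intervalIntegral.integral_mul_deriv_eq_deriv_mul (a := -π) (b := π)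
      (u := fun θ => P (s, θ)) (u' := fun θ => fderiv ℝ P (s, θ) (0, 1))
      (v := fun θ => fderiv ℝ Q (s, θ) (1, 0))
      (v' := fun θ => fderiv ℝ (fun z => fderiv ℝ Q z (0, 1)) (s, θ) (1, 0))
      (fun x _ => hasDerivAt_slice_snd hP1 s x)
      (fun x _ => by
        rw [fderiv_fderiv_comm hQ]
        exact hasDerivAt_slice_snd hQs1 s x)
      ((cPt s).intervalIntegrable _ _) ((cQst s).intervalIntegrable _ _)
    have perP : P (s, π) = P (s, -π) := by
      rw [← hPp s (-π)]; ring_nf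
    have perQ : fderiv ℝ Q (s, π) (1, 0) = fderiv ℝ Q (s, -π) (1, 0) := by
      rw [← (hasDerivAt_slice_fst hQ1 s π).deriv, ← (hasDerivAt_slice_fst hQ1 s (-π)).deriv]
      congr 1
      funext t
      rw [← hQp t (-π)]; ring_nf
    rw [perP, perQ, sub_self, zero_sub] at parts
    simp only [e1, hJ]
    rw [intervalIntegral.integral_add, parts, intervalIntegral.integral_sub, sub_eq_add_neg]
    · exact ((cPs s).mul (cQt s)).intervalIntegrable _ _
    · exact ((cPt s).mul (cQs s)).intervalIntegrable _ _
    · exact ((cPs s).mul (cQt s)).intervalIntegrable _ _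
    · exact ((cP s).mul (cQst s)).intervalIntegrable _ _
  set Y : ℝ → ℝ := fun s => K * I s + B * exp (μ * s) with hYdef
  set Y' : ℝ → ℝ := fun s => K * J s + 2 * π * C * exp (μ * s) with hY'def
  have hY : ∀ s, HasDerivAt Y (Y' s) s := by
    intro s
    have h1 : HasDerivAt (fun s : ℝ => exp (μ * s)) (exp (μ * s) * μ) s := by
      simpa using ((hasDerivAt_id s).const_mul μ).exp
    refine HasDerivAt.congr_deriv (((hIJ s).const_mul K).add (h1.const_mul B)) ?_
    simp only [hY'def, hB]
    field_simp
  set D : ℝ → ℝ := fun s => ∫ θ in -π..π, (fderiv ℝ P (s, θ) (1, 0) ^ 2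
    + fderiv ℝ P (s, θ) (0, 1) ^ 2 + fderiv ℝ Q (s, θ) (1, 0) ^ 2
    + fderiv ℝ Q (s, θ) (0, 1) ^ 2) with hD
  have hDsum : ∀ s, D s = (∫ θ in -π..π, fderiv ℝ P (s, θ) (1, 0) ^ 2)
      + (∫ θ in -π..π, fderiv ℝ P (s, θ) (0, 1) ^ 2)
      + (∫ θ in -π..π, fderiv ℝ Q (s, θ) (1, 0) ^ 2)
      + ∫ θ in -π..π, fderiv ℝ Q (s, θ) (0, 1) ^ 2 := by
    intro s
    have i1 : IntervalIntegrable (fun θ => fderiv ℝ P (s, θ) (1, 0) ^ 2) volume (-π) π :=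
      ((cPs s).pow 2).intervalIntegrable _ _
    have i2 : IntervalIntegrable (fun θ => fderiv ℝ P (s, θ) (0, 1) ^ 2) volume (-π) π :=
      ((cPt s).pow 2).intervalIntegrable _ _
    have i3 : IntervalIntegrable (fun θ => fderiv ℝ Q (s, θ) (1, 0) ^ 2) volume (-π) π :=
      ((cQs s).pow 2).intervalIntegrable _ _
    have i4 : IntervalIntegrable (fun θ => fderiv ℝ Q (s, θ) (0, 1) ^ 2) volume (-π) π :=
      ((cQt s).pow 2).intervalIntegrable _ _
    simp only [hD]
    rw [intervalIntegral.integral_add _ i4, intervalIntegral.integral_add _ i3,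
      intervalIntegral.integral_add i1 i2]
    · exact i1.add i2
    · exact (i1.add i2).add i3
  have nn : ∀ g : ℝ → ℝ, 0 ≤ ∫ θ in -π..π, g θ ^ 2 := fun g =>
    intervalIntegral.integral_nonneg (by linarith) fun _ _ => sq_nonneg _
  have hDY : ∀ s ≤ 0, D s ≤ Y' s := by
    intro s hs
    have : Y' s = ∫ θ in -π..π, (K * (fderiv ℝ P (s, θ) (1, 0) * fderiv ℝ Q (s, θ) (0, 1)
            - fderiv ℝ P (s, θ) (0, 1) * fderiv ℝ Q (s, θ) (1, 0)) + C * exp (μ * s)) := by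
      rw [intervalIntegral.integral_add _ intervalIntegrable_const,
        intervalIntegral.integral_const_mul, intervalIntegral.integral_const]
      · simp only [hY'def, hJ, smul_eq_mul]; ring
      · exact ((((cPs s).mul (cQt s)).sub ((cPt s).mul (cQs s))).const_mul K).intervalIntegrable _ _
    rw [this]
    refine intervalIntegral.integral_mono_on (by linarith) ?_ ?_ fun θ _ => hineq s hs θ
    · exact ((((((cPs s).pow 2).add ((cPt s).pow 2)).add ((cQs s).pow 2)).add
        ((cQt s).pow 2))).intervalIntegrable _ _
    · exact (((((cPs s).mul (cQt s)).sub ((cPt s).mul (cQs s))).const_mul K).add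
        continuous_const).intervalIntegrable _ _
  have hD0 : ∀ s, 0 ≤ D s := fun s => by
    rw [hDsum]
    linarith [nn fun θ => fderiv ℝ P (s, θ) (1, 0), nn fun θ => fderiv ℝ P (s, θ) (0, 1),
      nn fun θ => fderiv ℝ Q (s, θ) (1, 0), nn fun θ => fderiv ℝ Q (s, θ) (0, 1)]
  have hY0 : ∀ s ≤ 0, 0 ≤ Y' s := fun s hs => (hD0 s).trans (hDY s hs)
  have hPtD : ∀ s, (∫ θ in -π..π, |fderiv ℝ P (s, θ) (0, 1)|) ^ 2 ≤ 2 * π *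
      ∫ θ in -π..π, fderiv ℝ P (s, θ) (0, 1) ^ 2 := fun s => sq_integral_abs_le (cPt s)
  have hQtD : ∀ s, (∫ θ in -π..π, |fderiv ℝ Q (s, θ) (0, 1)|) ^ 2 ≤ 2 * π *
      ∫ θ in -π..π, fderiv ℝ Q (s, θ) (0, 1) ^ 2 := fun s => sq_integral_abs_le (cQt s)
  -- since `Q` is periodic, `P` may be replaced by its oscillation in the integral `I`
  have hgen : ∀ s a b, (∀ θ ∈ Set.Icc (-π) π, |P (s, θ) - a| ≤ b) →
      |I s| ≤ b * ∫ θ in -π..π, |fderiv ℝ Q (s, θ) (0, 1)| := by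
    intro s a b hab
    have z : ∫ θ in -π..π, fderiv ℝ Q (s, θ) (0, 1) = 0 := by
      rw [intervalIntegral.integral_eq_sub_of_hasDerivAt
        (fun x _ => hasDerivAt_slice_snd hQ1 s x) ((cQt s).intervalIntegrable _ _), sub_eq_zero,
        ← hQp s (-π)]
      ring_nf
    have e : I s = ∫ θ in -π..π, (P (s, θ) - a) * fderiv ℝ Q (s, θ) (0, 1) := by
      simp_rw [sub_mul]
      rw [intervalIntegral.integral_sub, intervalIntegral.integral_const_mul, z, mul_zero, sub_zero]
      · exact ((cP s).mul (cQt s)).intervalIntegrable _ _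
      · exact ((cQt s).const_mul a).intervalIntegrable _ _
    rw [e, ← intervalIntegral.integral_const_mul]
    refine (intervalIntegral.abs_integral_le_integral_abs (by linarith)).trans ?_
    refine intervalIntegral.integral_mono_on (by linarith) ?_ ?_ ?_
    · exact (((cP s).sub continuous_const).mul (cQt s)).abs.intervalIntegrable _ _
    · exact ((cQt s).abs.const_mul b).intervalIntegrable _ _
    · intro θ hθ
      rw [abs_mul]
      gcongr
      exact hab θ hθ
  have hI1 : ∀ s, |I s| ≤ π * D s := by
    intro s
    have h := hgen s (P (s, 0)) _ fun θ hθ =>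
      abs_sub_le_integral_deriv hP1 s hθ ⟨by linarith, by linarith⟩
    have h1 := hPtD s
    have h2 := hQtD s
    rw [hDsum]
    nlinarith [sq_nonneg ((∫ θ in -π..π, |fderiv ℝ P (s, θ) (0, 1)|)
      - ∫ θ in -π..π, |fderiv ℝ Q (s, θ) (0, 1)|), nn fun θ => fderiv ℝ P (s, θ) (1, 0),
      nn fun θ => fderiv ℝ Q (s, θ) (1, 0)]
  have hI2 : ∀ s ≤ 0, I s ^ 2 ≤ M ^ 2 * (2 * π) * D s := by
    intro s hs
    have h := hgen s 0 M fun θ _ => by simpa using hPM s hs θ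
    have h2 := hQtD s
    have h3 : (∫ θ in -π..π, fderiv ℝ Q (s, θ) (0, 1) ^ 2) ≤ D s := by
      rw [hDsum]
      linarith [nn fun θ => fderiv ℝ P (s, θ) (1, 0), nn fun θ => fderiv ℝ P (s, θ) (0, 1),
        nn fun θ => fderiv ℝ Q (s, θ) (1, 0)]
    calc I s ^ 2 = |I s| ^ 2 := (sq_abs _).symm
      _ ≤ (M * ∫ θ in -π..π, |fderiv ℝ Q (s, θ) (0, 1)|) ^ 2 := by gcongr
      _ = M ^ 2 * (∫ θ in -π..π, |fderiv ℝ Q (s, θ) (0, 1)|) ^ 2 := by ring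
      _ ≤ M ^ 2 * (2 * π * D s) := by
        gcongr
        exact h2.trans (by gcongr)
      _ = _ := by ring
  have hdec := hode Y Y' (fun s _ => hY s) hY0
    (by
      intro s hs
      simp only [hYdef, add_sub_cancel_right]
      rw [abs_mul, abs_of_pos hK]
      calc K * |I s| ≤ K * (π * D s) := by gcongr; exact hI1 s
        _ ≤ A * D s := by
          rw [← mul_assoc]
          exact mul_le_mul_of_nonneg_right (by rw [hA]; linarith [show 0 ≤ K ^ 2 * M ^ 2 * (2 * π) by positivity]) (hD0 s)
        _ ≤ A * Y' s := by gcongr; exact hDY s hs)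
    (by
      intro s hs
      simp only [hYdef, add_sub_cancel_right]
      calc (K * I s) ^ 2 = K ^ 2 * I s ^ 2 := by ring
        _ ≤ K ^ 2 * (M ^ 2 * (2 * π) * D s) := by gcongr; exact hI2 s hs
        _ = (K ^ 2 * M ^ 2 * (2 * π)) * D s := by ring
        _ ≤ A * D s := by
          exact mul_le_mul_of_nonneg_right (by rw [hA]; linarith [show 0 ≤ K * π by positivity]) (hD0 s)
        _ ≤ A * Y' s := by gcongr; exact hDY s hs)
  have hW1 : ContDiff ℝ 1 W := by rcases hW with rfl | rfl <;> assumption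
  refine circle_limit hc hC₁ hW1 (fun s _ => hY s) (fun s hs => (hdec s hs).1)
    (fun s hs => (hdec s hs).2) (fun s hs => ?_) (fun s hs => ?_)
  all_goals
    have h1 := hDY s (by linarith)
    rw [hDsum] at h1
    have n1 := nn fun θ => fderiv ℝ P (s, θ) (1, 0)
    have n2 := nn fun θ => fderiv ℝ P (s, θ) (0, 1)
    have n3 := nn fun θ => fderiv ℝ Q (s, θ) (1, 0)
    have n4 := nn fun θ => fderiv ℝ Q (s, θ) (0, 1)
    rcases hW with rfl | rfl <;> linarith

/-! ### Logarithmic polar coordinates -/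

/-- The coordinate vectors of the plane. -/
def ev (i : Fin 2) : E2 := EuclideanSpace.single i (1 : ℝ)

/-- Logarithmic polar coordinates `(s, θ)` around `z`; the circle with parameter `s` has radius
`R * exp (σ * s)`, so `σ = 1` parametrizes a disc and `σ = -1` an exterior domain by `s ≤ 0`. -/
def logPolar (z : E2) (R σ : ℝ) (x : ℝ × ℝ) : E2 :=
  z + (R * exp (σ * x.1) * cos x.2) • ev 0 + (R * exp (σ * x.1) * sin x.2) • ev 1

lemma contDiff_logPolar (z : E2) (R σ : ℝ) : ContDiff ℝ 2 (logPolar z R σ) := by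
  unfold logPolar
  fun_prop

lemma E2_eq (v : E2) : v = v 0 • ev 0 + v 1 • ev 1 := by
  ext i
  fin_cases i <;> simp [ev]

lemma norm_sq_E2 (v : E2) : ‖v‖ ^ 2 = v 0 ^ 2 + v 1 ^ 2 := by
  rw [EuclideanSpace.norm_sq_eq]; simp

lemma norm_logPolar_sub (z : E2) {R : ℝ} (hR : 0 ≤ R) (σ s θ : ℝ) :
    ‖logPolar z R σ (s, θ) - z‖ = R * exp (σ * s) := by
  have h : ‖logPolar z R σ (s, θ) - z‖ ^ 2 = (R * exp (σ * s)) ^ 2 := by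
    rw [norm_sq_E2]
    simp [logPolar, ev]
    linear_combination (R * exp (σ * s)) ^ 2 * (sin_sq_add_cos_sq θ)
  exact (sq_eq_sq₀ (norm_nonneg _) (by positivity)).1 h

/-- Every point of a circle has an angle in `[-π, π]`, given by the complex argument. -/
lemma exists_angle (z : E2) {R σ s : ℝ} {y : E2} (hy : ‖y - z‖ = R * exp (σ * s)) :
    ∃ θ ∈ Set.Icc (-π) π, y = logPolar z R σ (s, θ) := by
  set w : ℂ := ⟨(y - z) 0, (y - z) 1⟩ with hw
  have hn : ‖w‖ = R * exp (σ * s) := by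
    rw [← hy]
    refine (sq_eq_sq₀ (norm_nonneg _) (norm_nonneg _)).1 ?_
    rw [norm_sq_E2, ← Complex.normSq_eq_norm_sq, Complex.normSq_apply]
    simp only [hw]; ring
  refine ⟨w.arg, Set.Ioc_subset_Icc_self w.arg_mem_Ioc, ?_⟩
  unfold logPolar
  rw [← hn, Complex.norm_mul_cos_arg, Complex.norm_mul_sin_arg, add_assoc]
  have := E2_eq (y - z)
  rw [← sub_eq_iff_eq_add']
  exact this

lemma logPolar_deriv_fst {p : E2 → ℝ} (hp : ContDiff ℝ 2 p) (z : E2) (R σ s θ : ℝ) :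
    fderiv ℝ (p ∘ logPolar z R σ) (s, θ) (1, 0) = σ * (R * exp (σ * s)) *
      (cos θ * fderiv ℝ p (logPolar z R σ (s, θ)) (ev 0)
        + sin θ * fderiv ℝ p (logPolar z R σ (s, θ)) (ev 1)) := by
  have hc : ContDiff ℝ 1 (p ∘ logPolar z R σ) :=
    (hp.comp (contDiff_logPolar z R σ)).of_le (by norm_num)
  have h1 : HasDerivAt (fun s : ℝ => exp (σ * s)) (exp (σ * s) * σ) s := by
    simpa using ((hasDerivAt_id s).const_mul σ).exp
  have h2 : HasDerivAt (fun s : ℝ => logPolar z R σ (s, θ))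
      ((R * (exp (σ * s) * σ) * cos θ) • ev 0 + (R * (exp (σ * s) * σ) * sin θ) • ev 1) s :=
    ((((h1.const_mul R).mul_const (cos θ)).smul_const (ev 0)).const_add z).add
      (((h1.const_mul R).mul_const (sin θ)).smul_const (ev 1))
  have h3 := ((hp.differentiable two_ne_zero (logPolar z R σ (s, θ))).hasFDerivAt).comp_hasDerivAt
    s h2
  rw [(hasDerivAt_slice_fst hc s θ).unique h3]
  simp only [map_add, map_smul, smul_eq_mul]
  ring

lemma logPolar_deriv_snd {p : E2 → ℝ} (hp : ContDiff ℝ 2 p) (z : E2) (R σ s θ : ℝ) :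
    fderiv ℝ (p ∘ logPolar z R σ) (s, θ) (0, 1) = (R * exp (σ * s)) *
      (-sin θ * fderiv ℝ p (logPolar z R σ (s, θ)) (ev 0)
        + cos θ * fderiv ℝ p (logPolar z R σ (s, θ)) (ev 1)) := by
  have hc : ContDiff ℝ 1 (p ∘ logPolar z R σ) :=
    (hp.comp (contDiff_logPolar z R σ)).of_le (by norm_num)
  have h2 : HasDerivAt (fun θ : ℝ => logPolar z R σ (s, θ))
      (((R * exp (σ * s)) * -sin θ) • ev 0 + ((R * exp (σ * s)) * cos θ) • ev 1) θ :=
    ((((hasDerivAt_cos θ).const_mul (R * exp (σ * s))).smul_const (ev 0)).const_add z).add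
      (((hasDerivAt_sin θ).const_mul (R * exp (σ * s))).smul_const (ev 1))
  have h3 := ((hp.differentiable two_ne_zero (logPolar z R σ (s, θ))).hasFDerivAt).comp_hasDerivAt
    θ h2
  rw [(hasDerivAt_slice_snd hc s θ).unique h3]
  simp only [map_add, map_smul, smul_eq_mul]
  ring

/-- The squared norm of the Jacobian matrix of `(p, q)`. -/
def energy (p q : E2 → ℝ) (y : E2) : ℝ :=
  fderiv ℝ p y (ev 0) ^ 2 + fderiv ℝ p y (ev 1) ^ 2
    + fderiv ℝ q y (ev 0) ^ 2 + fderiv ℝ q y (ev 1) ^ 2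

/-- The Jacobian determinant of `(p, q)`. -/
def jac (p q : E2 → ℝ) (y : E2) : ℝ :=
  fderiv ℝ p y (ev 0) * fderiv ℝ q y (ev 1) - fderiv ℝ p y (ev 1) * fderiv ℝ q y (ev 0)

lemma energy_swap (p q : E2 → ℝ) (y : E2) : energy q p y = energy p q y := by
  unfold energy; ring

lemma jac_swap (p q : E2 → ℝ) (y : E2) : jac q p y = -jac p q y := by
  unfold jac; ring

/-- The estimate `cylinder` in logarithmic polar coordinates. These preserve orientation up to the
sign `σ`, so the Jacobian enters with the factor `σ`. -/
lemma polar_decay {M K C μ : ℝ} (hM : 0 < M) (hK : 0 < K) (hC : 0 < C) (hμ : 0 < μ) :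
    ∃ c > 0, ∃ C' > 0, ∀ (p q : E2 → ℝ) (z : E2) (R σ : ℝ), ContDiff ℝ 2 p → ContDiff ℝ 2 q →
      0 < R → σ ^ 2 = 1 →
      (∀ s ≤ 0, ∀ y, ‖y - z‖ = R * exp (σ * s) → |p y| ≤ M) →
      (∀ s ≤ 0, ∀ y, ‖y - z‖ = R * exp (σ * s) → ∃ e, energy p q y ≤ K * (σ * jac p q y) + e ∧
        e * (R * exp (σ * s)) ^ 2 ≤ C * exp (μ * s)) →
      ∀ W, (W = p ∨ W = q) →
        ∃ L, ∀ S ≤ -1, ∀ h, 0 < h → h ≤ 1 → ∃ s ∈ Set.Icc (S - h) S,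
          ∀ y, ‖y - z‖ = R * exp (σ * s) → |W y - L| ≤ C' * exp (c * S) / √h := by
  obtain ⟨c, hc, C', hC', H⟩ := cylinder hM hK hC hμ
  refine ⟨c, hc, C', hC', fun p q z R σ hp hq hR hσ hpM hineq W hW => ?_⟩
  have per : ∀ s θ, logPolar z R σ (s, θ + 2 * π) = logPolar z R σ (s, θ) := by
    intro s θ; simp [logPolar]
  obtain ⟨L, hL⟩ := H (p ∘ logPolar z R σ) (q ∘ logPolar z R σ)
    (hp.comp (contDiff_logPolar z R σ)) (hq.comp (contDiff_logPolar z R σ))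
    (fun s θ => by simp only [Function.comp, per]) (fun s θ => by simp only [Function.comp, per])
    (fun s hs θ => hpM s hs _ (norm_logPolar_sub z hR.le σ s θ))
    (fun s hs θ => by
      obtain ⟨e, he1, he2⟩ := hineq s hs _ (norm_logPolar_sub z hR.le σ s θ)
      rw [logPolar_deriv_fst hp, logPolar_deriv_fst hq, logPolar_deriv_snd hp,
        logPolar_deriv_snd hq]
      unfold energy jac at he1
      set y := logPolar z R σ (s, θ)
      set r := R * exp (σ * s)
      have hr : 0 ≤ r ^ 2 := sq_nonneg r
      have key := mul_le_mul_of_nonneg_right he1 hr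
      have tr := sin_sq_add_cos_sq θ
      -- the change of variables is conformal: energy and Jacobian both scale by `r ^ 2`
      have hE : ∀ a b : ℝ, (σ * r * (cos θ * a + sin θ * b)) ^ 2
          + (r * (-sin θ * a + cos θ * b)) ^ 2 = (a ^ 2 + b ^ 2) * r ^ 2 := by
        intro a b
        linear_combination r ^ 2 * (cos θ * a + sin θ * b) ^ 2 * hσ + r ^ 2 * (a ^ 2 + b ^ 2) * tr
      have hJ : ∀ a b c d : ℝ, σ * r * (cos θ * a + sin θ * b) * (r * (-sin θ * c + cos θ * d))
          - r * (-sin θ * a + cos θ * b) * (σ * r * (cos θ * c + sin θ * d))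
          = σ * (a * d - b * c) * r ^ 2 := by
        intro a b c d
        linear_combination σ * r ^ 2 * (a * d - b * c) * tr
      have E1 := hE (fderiv ℝ p y (ev 0)) (fderiv ℝ p y (ev 1))
      have E2 := hE (fderiv ℝ q y (ev 0)) (fderiv ℝ q y (ev 1))
      rw [hJ]
      linarith)
    (W ∘ logPolar z R σ) (by rcases hW with rfl | rfl <;> simp)
  refine ⟨L, fun S hS h h0 h1 => ?_⟩
  obtain ⟨s, hs, hb⟩ := hL S hS h h0 h1
  refine ⟨s, hs, fun y hy => ?_⟩
  obtain ⟨θ, hθ, rfl⟩ := exists_angle z hy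
  exact hb θ hθ

/-! ### Limits at infinity of perturbed quasiregular pairs -/

/-- Circles with centers `x` and `0` meet as soon as their radii allow it. -/
lemma exists_mem_spheres (x : E2) {r ρ : ℝ} (h0 : 0 ≤ r) (h1 : ‖x‖ ≤ ρ)
    (h2 : ρ ≤ ‖x‖ + r) (hrx : r ≤ ‖x‖) : ∃ y : E2, ‖y - x‖ = r ∧ ‖y‖ = ρ := by
  rcases eq_or_ne x 0 with rfl | hx
  · simp only [norm_zero] at h1 h2 hrx
    exact ⟨0, by simp; linarith, by simp; linarith⟩
  have hxn : 0 < ‖x‖ := norm_pos_iff.2 hx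
  have hconn : IsPreconnected (Metric.sphere x r) := isPreconnected_sphere
    (Module.lt_rank_of_lt_finrank (by simp)) x r
  have m1 : (1 - r / ‖x‖) • x ∈ Metric.sphere x r := by
    rw [mem_sphere_iff_norm, sub_smul, one_smul, sub_sub_cancel_left, norm_neg, norm_smul,
      norm_of_nonneg (by positivity), div_mul_cancel₀ _ hxn.ne']
  have m2 : (1 + r / ‖x‖) • x ∈ Metric.sphere x r := by
    rw [mem_sphere_iff_norm, add_smul, one_smul, add_sub_cancel_left, norm_smul,
      norm_of_nonneg (by positivity), div_mul_cancel₀ _ hxn.ne']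
  have hle : r / ‖x‖ ≤ 1 := (div_le_one hxn).2 hrx
  obtain ⟨y, hy, hyρ⟩ := hconn.intermediate_value m1 m2 continuous_norm.continuousOn
    (show ρ ∈ Set.Icc _ _ by
      rw [norm_smul, norm_smul, norm_of_nonneg (by linarith), norm_of_nonneg (by positivity),
        sub_mul, add_mul, div_mul_cancel₀ _ hxn.ne']
      constructor <;> linarith)
  exact ⟨y, mem_sphere_iff_norm.1 hy, hyρ⟩

lemma rpow_mul_sq {r β : ℝ} (hr : 0 < r) : r ^ (-2 * β - 2) * r ^ 2 = r ^ (-2 * β) := by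
  rw [← rpow_natCast r 2, ← rpow_add hr]; congr 1; push_cast; ring

set_option maxHeartbeats 1000000 in
/-- A bounded pair of functions satisfying a perturbed quasiregularity inequality near infinity has
a limit at infinity, with a power rate. The limit `L` comes from circles around the origin, the value
`W x` from circles around `x`; since the estimates hold on many circles, two of them can be chosen
which intersect. Around `x` the roles of `p` and `q` are exchanged, because `σ` changes sign. -/
lemma pair_limit {M K C β R₀ : ℝ} (hM : 0 < M) (hK : 0 < K) (hC : 0 < C) (hβ : 0 < β)
    (hR₀ : 1 ≤ R₀) :
    ∃ ε ∈ Set.Ioo (0 : ℝ) 1, ∃ C' > 0, ∃ R₁ > 1, ∀ p q : E2 → ℝ, ContDiff ℝ 2 p → ContDiff ℝ 2 q →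
      (∀ y, R₀ ≤ ‖y‖ → |p y| ≤ M ∧ |q y| ≤ M) →
      (∀ y, R₀ ≤ ‖y‖ → energy p q y ≤ K * (-jac p q y) + C * ‖y‖ ^ (-2 * β - 2)) →
      ∀ W, (W = p ∨ W = q) → ∃ L, ∀ x, R₁ ≤ ‖x‖ → |W x - L| ≤ C' * ‖x‖ ^ (-ε) := by
  have hR₀' : 0 < R₀ := by linarith
  set μ := min 2 (2 * β) with hμdef
  have hμ : 0 < μ := by positivity
  obtain ⟨c, hc, C₁, hC₁, H⟩ := polar_decay hM hK hC hμ
  set ε := min (c ^ 2) (min (c / 2) (1 / 2)) with hε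
  have hε0 : 0 < ε := by positivity
  have hε1 : ε ≤ c ^ 2 := min_le_left _ _
  have hε2 : ε ≤ c / 2 := (min_le_right _ _).trans (min_le_left _ _)
  have hε3 : ε ≤ 1 / 2 := (min_le_right _ _).trans (min_le_right _ _)
  refine ⟨ε, ⟨hε0, by linarith⟩, C₁ * (exp (c * 3) + 1) * R₀ ^ ε, by positivity,
    2 * R₀ * exp (1 + 4 / c), ?_, ?_⟩
  · have : 1 < exp (1 + 4 / c) := one_lt_exp_iff.2 (by positivity)
    nlinarith
  intro p q hp hq hpq hineq W hW
  -- behaviour along circles around the origin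
  obtain ⟨L, hL⟩ := H p q 0 R₀ (-1) hp hq hR₀' (by norm_num)
    (fun s hs y hy => by
      rw [sub_zero] at hy
      refine (hpq y ?_).1
      rw [hy]
      exact le_mul_of_one_le_right hR₀'.le (one_le_exp (by linarith)))
    (fun s hs y hy => by
      rw [sub_zero] at hy
      have hle : R₀ ≤ ‖y‖ := by
        rw [hy]
        exact le_mul_of_one_le_right hR₀'.le (one_le_exp (by linarith))
      refine ⟨C * ‖y‖ ^ (-2 * β - 2), ?_, ?_⟩
      · linarith [hineq y hle]
      · rw [← hy, mul_assoc, rpow_mul_sq (by linarith), hy, mul_rpow hR₀'.le (exp_pos _).le,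
          ← exp_mul]
        have h1 : R₀ ^ (-2 * β) ≤ 1 := rpow_le_one_of_one_le_of_nonpos hR₀ (by linarith)
        have h2 : exp (-1 * s * (-2 * β)) ≤ exp (μ * s) := by
          rw [exp_le_exp]
          have : μ ≤ 2 * β := min_le_right _ _
          nlinarith
        calc C * (R₀ ^ (-2 * β) * exp (-1 * s * (-2 * β))) ≤ C * (1 * exp (μ * s)) := by gcongr
          _ = _ := by ring)
    W hW
  refine ⟨L, fun x hx => ?_⟩
  have hexp1 : 1 ≤ exp (1 + 4 / c) := one_le_exp (by positivity)
  have hx2 : 2 * R₀ ≤ ‖x‖ := by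
    refine le_trans ?_ hx
    exact le_mul_of_one_le_right (by positivity) hexp1
  have hx0 : 0 < ‖x‖ := by linarith
  have hr0 : 0 < ‖x‖ / 2 := by positivity
  -- behaviour along circles around `x`
  obtain ⟨L', hL'⟩ := H q p x (‖x‖ / 2) 1 hq hp hr0 (by norm_num)
    (fun s hs y hy => by
      refine (hpq y ?_).2
      have h1 : ‖y - x‖ ≤ ‖x‖ / 2 := by
        rw [hy]
        exact mul_le_of_le_one_right hr0.le (exp_le_one_iff.2 (by linarith))
      linarith [norm_sub_norm_le x y, norm_sub_rev x y])
    (fun s hs y hy => by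
      have h1 : ‖y - x‖ ≤ ‖x‖ / 2 := by
        rw [hy]
        exact mul_le_of_le_one_right hr0.le (exp_le_one_iff.2 (by linarith))
      have hle : ‖x‖ / 2 ≤ ‖y‖ := by
        linarith [norm_sub_norm_le x y, norm_sub_rev x y]
      refine ⟨C * ‖y‖ ^ (-2 * β - 2), ?_, ?_⟩
      · rw [energy_swap, jac_swap]
        linarith [hineq y (by linarith)]
      · have h2 : ‖y‖ ^ (-2 * β - 2) ≤ (‖x‖ / 2) ^ (-2 * β - 2) :=
          rpow_le_rpow_of_nonpos hr0 hle (by linarith)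
        have h3 : (‖x‖ / 2) ^ (-2 * β) ≤ 1 :=
          rpow_le_one_of_one_le_of_nonpos (by linarith) (by linarith)
        have h4 : exp (1 * s) ^ 2 ≤ exp (μ * s) := by
          rw [← exp_nat_mul, exp_le_exp]
          have : μ ≤ 2 := min_le_left _ _
          push_cast
          nlinarith
        calc C * ‖y‖ ^ (-2 * β - 2) * (‖x‖ / 2 * exp (1 * s)) ^ 2
            ≤ C * (‖x‖ / 2) ^ (-2 * β - 2) * (‖x‖ / 2 * exp (1 * s)) ^ 2 := by gcongr
          _ = C * ((‖x‖ / 2) ^ (-2 * β - 2) * (‖x‖ / 2) ^ 2 * exp (1 * s) ^ 2) := by ring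
          _ = C * ((‖x‖ / 2) ^ (-2 * β) * exp (1 * s) ^ 2) := by rw [rpow_mul_sq hr0]
          _ ≤ C * (1 * exp (μ * s)) := by gcongr
          _ = _ := by ring)
    W hW.symm
  have hWc : Continuous W := by
    rcases hW with rfl | rfl
    exacts [hp.continuous, hq.continuous]
  -- shrinking the circles around `x` identifies the limit there
  have hL'x : L' = W x := by
    refine (eq_of_abs_sub_le_all fun δ hδ => ?_).symm
    obtain ⟨η, hη, hcont⟩ := Metric.continuous_iff.1 hWc x (δ / 2) (by positivity)
    have t1 : Filter.Tendsto (fun S => C₁ * exp (c * S)) Filter.atBot (nhds 0) := by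
      have := (tendsto_exp_atBot.comp (Filter.tendsto_id.const_mul_atBot hc)).const_mul C₁
      simpa using this
    have t2 : Filter.Tendsto (fun S => ‖x‖ / 2 * exp S) Filter.atBot (nhds 0) := by
      have := tendsto_exp_atBot.const_mul (‖x‖ / 2)
      simpa using this
    obtain ⟨S, hS1, hS2, hS3⟩ := ((t1.eventually_lt_const (show 0 < δ / 2 by positivity)).and
      ((t2.eventually_lt_const hη).and (Filter.eventually_le_atBot (-1)))).exists
    obtain ⟨s, hs, hb⟩ := hL' S hS3 1 one_pos le_rfl
    have hy : ‖(x + (‖x‖ / 2 * exp (1 * s)) • ev 0) - x‖ = ‖x‖ / 2 * exp (1 * s) := by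
      rw [add_sub_cancel_left, norm_smul, norm_of_nonneg (by positivity)]
      simp [ev]
    have h1 := hb _ hy
    have h2 := hcont (x + (‖x‖ / 2 * exp (1 * s)) • ev 0) (by
      rw [dist_eq_norm, hy]
      refine lt_of_le_of_lt ?_ hS2
      gcongr
      rw [one_mul]; exact hs.2)
    rw [dist_eq_norm, norm_eq_abs] at h2
    rw [sqrt_one, div_one] at h1
    have h3 := abs_sub_le (W x) (W (x + (‖x‖ / 2 * exp (1 * s)) • ev 0)) L'
    rw [abs_sub_comm (W x) (W (x + _))] at h3
    linarith
  rw [hL'x] at hL'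
  -- the circle around `0` has radius in `[‖x‖, exp (exp (c * S)) * ‖x‖]`, hence at distance at most
  -- `2 * exp (c * S) * ‖x‖` from `x`, and the circle around `x` has radius at least that distance
  set S := -log (‖x‖ / R₀) with hSdef
  have hxR : 0 < ‖x‖ / R₀ := by positivity
  have heS : R₀ * exp (-S) = ‖x‖ := by
    rw [hSdef, neg_neg, exp_log hxR]; field_simp
  have hSle : S ≤ -(1 + 4 / c) := by
    rw [hSdef, neg_le_neg_iff, le_log_iff_exp_le hxR, le_div_iff₀ hR₀']
    nlinarith
  have hc4 : 0 < 4 / c := by positivity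
  have hcS : c * S ≤ -4 := by
    have : c * S ≤ c * (-(4 / c)) := by gcongr; linarith
    calc _ ≤ _ := this
      _ = -4 := by field_simp
  have hh1 : exp (c * S) ≤ 1 := exp_le_one_iff.2 (by linarith)
  obtain ⟨s, hs, hbs⟩ := hL S (by linarith) (exp (c * S)) (exp_pos _) hh1
  obtain ⟨t, ht, hbt⟩ := hL' (c * S + 3) (by linarith) 1 one_pos le_rfl
  have hSneg : S ≤ 0 := by linarith
  obtain ⟨y, hy1, hy2⟩ := exists_mem_spheres x (r := ‖x‖ / 2 * exp (1 * t))
    (ρ := R₀ * exp (-1 * s)) (by positivity)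
    (by
      rw [← heS]
      gcongr
      linarith [hs.2])
    (by
      have e1 : exp (-1 * s) ≤ exp (-S) * exp (exp (c * S)) := by
        rw [← exp_add, exp_le_exp]
        linarith [hs.1]
      have e2 : exp (exp (c * S)) ≤ 1 + 2 * exp (c * S) := by
        have := abs_exp_sub_one_le (x := exp (c * S)) (by rw [abs_of_pos (exp_pos _)]; exact hh1)
        rw [abs_of_pos (exp_pos (c * S))] at this
        linarith [le_abs_self (exp (exp (c * S)) - 1)]
      have e3 : 4 * exp (c * S) ≤ exp (1 * t) := by
        have a1 : exp (c * S + 2) ≤ exp (1 * t) := by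
          rw [exp_le_exp]; linarith [ht.1]
        have a2 : (4 : ℝ) ≤ exp 2 := by
          have : exp 2 = exp 1 * exp 1 := by rw [← exp_add]; norm_num
          rw [this]
          nlinarith [add_one_le_exp (1 : ℝ)]
        rw [exp_add] at a1
        nlinarith [exp_pos (c * S)]
      calc R₀ * exp (-1 * s) ≤ R₀ * (exp (-S) * exp (exp (c * S))) := by gcongr
        _ = ‖x‖ * exp (exp (c * S)) := by rw [← mul_assoc, heS]
        _ ≤ ‖x‖ * (1 + 2 * exp (c * S)) := by gcongr
        _ = ‖x‖ + ‖x‖ / 2 * (4 * exp (c * S)) := by ring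
        _ ≤ _ := by gcongr)
    (by
      have : exp (1 * t) ≤ 1 := exp_le_one_iff.2 (by linarith [ht.2])
      nlinarith)
  have b1 := hbs y (by rw [sub_zero]; exact hy2)
  have b2 := hbt y hy1
  have hpow : R₀ ^ ε * ‖x‖ ^ (-ε) = exp (ε * S) := by
    rw [← heS, mul_rpow hR₀'.le (exp_pos _).le, ← mul_assoc, ← rpow_add hR₀', add_neg_cancel,
      rpow_zero, one_mul, ← exp_mul]
    ring_nf
  have f1 : C₁ * exp (c * S) / √(exp (c * S)) ≤ C₁ * exp (ε * S) := by
    have : c * S / 2 ≤ ε * S := by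
      have := mul_le_mul_of_nonpos_right hε2 hSneg
      linarith
    rw [mul_div_assoc, div_sqrt, ← exp_half]
    exact mul_le_mul_of_nonneg_left (exp_le_exp.2 this) hC₁.le
  have f2 : C₁ * exp (c * (c * S + 3)) / √1 ≤ C₁ * exp (c * 3) * exp (ε * S) := by
    have : c * (c * S + 3) ≤ c * 3 + ε * S := by
      have := mul_le_mul_of_nonpos_right hε1 hSneg
      linarith
    rw [sqrt_one, div_one, mul_assoc, ← exp_add]
    exact mul_le_mul_of_nonneg_left (exp_le_exp.2 this) hC₁.le
  have h3 := abs_sub_le (W x) (W y) L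
  rw [abs_sub_comm (W x) (W y)] at h3
  calc |W x - L| ≤ C₁ * exp (c * 3) * exp (ε * S) + C₁ * exp (ε * S) := by linarith
    _ = C₁ * (exp (c * 3) + 1) * (R₀ ^ ε * ‖x‖ ^ (-ε)) := by rw [hpow]; ring
    _ = _ := by ring

/-! ### The differentiated elliptic equation -/

/-- A function which is smooth outside a bounded set agrees near infinity with a globally
four times differentiable function. -/
lemma exists_smooth_extension {Ω : Set E2} (hΩb : Bornology.IsBounded Ω) {u : E2 → ℝ}
    (hu : ContDiffOn ℝ (⊤ : ℕ∞) u (closure Ω)ᶜ) :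
    ∃ v : E2 → ℝ, ContDiff ℝ 4 v ∧ ∃ R ≥ 1, ∀ x, R ≤ ‖x‖ → x ∈ (closure Ω)ᶜ ∧ v =ᶠ[nhds x] u := by
  obtain ⟨r, hr⟩ := hΩb.closure.subset_ball_lt 1 0
  obtain ⟨hr1, hr⟩ := hr
  let χ : ContDiffBump (0 : E2) := ⟨r, r + 1, by linarith, by linarith⟩
  refine ⟨fun x => (1 - χ x) * u x, ?_, r + 2, by linarith, fun x hx => ⟨fun h => ?_, ?_⟩⟩
  · rw [contDiff_iff_contDiffAt]
    intro x
    by_cases hx : x ∈ closure Ω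
    · refine (contDiffAt_const (c := (0 : ℝ))).congr_of_eventuallyEq ?_
      filter_upwards [χ.eventuallyEq_one_of_mem_ball (hr hx)] with y hy
      rw [hy]; simp
    · have h1 : ContDiffAt ℝ 4 u x :=
        (hu.contDiffAt (isClosed_closure.isOpen_compl.mem_nhds hx)).of_le
          (WithTop.coe_le_coe.2 (le_top : (4 : ℕ∞) ≤ ⊤))
      exact (contDiffAt_const.sub χ.contDiffAt).mul h1
  · have := hr h
    rw [mem_ball_zero_iff] at this
    linarith
  · have hopen : IsOpen {y : E2 | r + 1 < ‖y‖} := isOpen_lt continuous_const continuous_norm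
    filter_upwards [hopen.mem_nhds (show r + 1 < ‖x‖ by linarith)] with y hy
    rw [χ.zero_of_le_dist (by rw [dist_zero_right]; exact le_of_lt hy)]
    simp

/-- Second partial derivatives as iterated first ones. -/
lemma hess_apply {v : E2 → ℝ} (hv : ContDiff ℝ 2 v) (x : E2) (i j : Fin 2) :
    Hess v x i j = fderiv ℝ (fun z => fderiv ℝ v z (ev j)) x (ev i) := by
  have hd : DifferentiableAt ℝ (fderiv ℝ v) x :=
    (hv.fderiv_right (m := 1) (by norm_num)).differentiable one_ne_zero x
  have := (hd.hasFDerivAt.clm_apply (hasFDerivAt_const (ev j) x)).fderiv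
  rw [this]
  simp [Hess, iteratedFDeriv_two_apply, ev]

lemma hess_congr {u v : E2 → ℝ} {x : E2} (h : v =ᶠ[nhds x] u) : Hess u x = Hess v x := by
  ext i j
  simp only [Hess, Matrix.of_apply]
  rw [Filter.EventuallyEq.eq_of_nhds (h.iteratedFDeriv ℝ 2)]

lemma hess_symm {v : E2 → ℝ} (hv : ContDiff ℝ 2 v) (x : E2) (i j : Fin 2) :
    Hess v x i j = Hess v x j i := by
  rw [hess_apply hv, hess_apply hv, fderiv_fderiv_comm hv]

lemma contDiff_hess {v : E2 → ℝ} (hv : ContDiff ℝ 4 v) (i j : Fin 2) :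
    ContDiff ℝ 2 (fun x => Hess v x i j) := by
  have h2 : ContDiff ℝ 2 v := hv.of_le (by norm_num)
  simp only [hess_apply h2]
  have h3 : ContDiff ℝ 3 (fun z => fderiv ℝ v z (ev j)) :=
    (hv.fderiv_right (m := 3) (by norm_num)).clm_apply contDiff_const
  exact (h3.fderiv_right (m := 2) (by norm_num)).clm_apply contDiff_const

/-- Third derivatives commute. -/
lemma fderiv_hess_comm {v : E2 → ℝ} (hv : ContDiff ℝ 4 v) (x : E2) (i j k : Fin 2) :
    fderiv ℝ (fun z => Hess v z i j) x (ev k) = fderiv ℝ (fun z => Hess v z k j) x (ev i) := by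
  have h2 : ContDiff ℝ 2 v := hv.of_le (by norm_num)
  simp only [hess_apply h2]
  have h3 : ContDiff ℝ 3 (fun z => fderiv ℝ v z (ev j)) :=
    (hv.fderiv_right (m := 3) (by norm_num)).clm_apply contDiff_const
  exact fderiv_fderiv_comm (h3.of_le (by norm_num)) x (ev i) (ev k)

/-- The quantitative content of the decay condition: `f` is of size `|x| ^ (-β)` and it has local
Lipschitz constants of size `|x| ^ (-β - 1)`. -/
lemma decay_lip {β : ℝ} (hβ : 0 < β) {u f : E2 → ℝ} (h : DecayCond β u f) :
    ∃ C₀ > 0, ∃ R₀ > 0, ∀ x : E2, R₀ ≤ ‖x‖ → |f x| ≤ C₀ * ‖x‖ ^ (-β) ∧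
      ∀ y ∈ Metric.ball x (‖x‖ / 2), |f y - f x| ≤ C₀ * ‖x‖ ^ (-β - 1) * ‖y - x‖ := by
  obtain ⟨C₀, hC₀, R₀, hR₀, H⟩ := h
  refine ⟨C₀, hC₀, R₀, hR₀, fun x hx => ?_⟩
  have hx0 : 0 < ‖x‖ := by linarith
  have hg : ‖x‖ ≤ ‖x‖ + ‖gradient u x‖ := by linarith [norm_nonneg (gradient u x)]
  have h0 := H x hx
  constructor
  · have h1 := le_trans le_self_add h0
    rw [ENNReal.ofReal_le_ofReal_iff hC₀.le] at h1
    rw [rpow_neg hx0.le, ← div_eq_mul_inv, le_div_iff₀ (by positivity), mul_comm]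
    refine le_trans ?_ h1
    gcongr
  · intro y hy
    rcases eq_or_ne y x with rfl | hyx
    · simp
    have hyx' : 0 < ‖y - x‖ := norm_pos_iff.2 (sub_ne_zero.2 hyx)
    have h1 := le_trans le_add_self h0
    have h2 : ENNReal.ofReal (|f y - f x| / ‖y - x‖)
        ≤ hSemi 1 (Metric.ball x (‖x‖ / 2)) f := by
      have := le_iSup₂_of_le (f := fun a (_ : a ∈ Metric.ball x (‖x‖ / 2)) =>
        ⨆ b ∈ Metric.ball x (‖x‖ / 2), ENNReal.ofReal (‖f a - f b‖ / ‖a - b‖ ^ (1 : ℝ))) y hy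
        (le_iSup₂_of_le (f := fun b (_ : b ∈ Metric.ball x (‖x‖ / 2)) =>
          ENNReal.ofReal (‖f y - f b‖ / ‖y - b‖ ^ (1 : ℝ))) x
          (Metric.mem_ball_self (by positivity)) le_rfl)
      simpa [hSemi] using this
    have h3 := (mul_le_mul_right h2
      (ENNReal.ofReal ((‖x‖ + ‖gradient u x‖) ^ (β + 1)))).trans h1
    rw [← ENNReal.ofReal_mul (by positivity), ENNReal.ofReal_le_ofReal_iff hC₀.le] at h3
    have h4 : ‖x‖ ^ (β + 1) * (|f y - f x| / ‖y - x‖) ≤ C₀ := by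
      refine le_trans ?_ h3
      gcongr
    rw [show -β - 1 = -(β + 1) by ring, rpow_neg hx0.le, ← div_le_iff₀ hyx', ← div_eq_mul_inv,
      le_div_iff₀ (by positivity), mul_comm]
    exact h4

/-- The linearization of `G` at a symmetric matrix is an elliptic quadratic form. -/
lemma ellipticity_deriv {lam Lam : ℝ} {G : Matrix (Fin 2) (Fin 2) ℝ → ℝ}
    (hG : ContDiff ℝ 2 (fun m : Fin 2 → Fin 2 → ℝ => G (Matrix.of m)))
    (hell : ∀ S N : Matrix (Fin 2) (Fin 2) ℝ, S.IsSymm → N.PosSemidef →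
      lam * N.trace ≤ G (S + N) - G S ∧ G (S + N) - G S ≤ Lam * N.trace)
    {S : Matrix (Fin 2) (Fin 2) ℝ} (hS : S.IsSymm) (N : Matrix (Fin 2) (Fin 2) ℝ)
    (hN : N.PosSemidef) :
    lam * N.trace ≤ fderiv ℝ (fun m : Fin 2 → Fin 2 → ℝ => G (Matrix.of m)) (Matrix.of.symm S)
      (Matrix.of.symm N) ∧
    fderiv ℝ (fun m : Fin 2 → Fin 2 → ℝ => G (Matrix.of m)) (Matrix.of.symm S)
      (Matrix.of.symm N) ≤ Lam * N.trace := by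
  set g := fun m : Fin 2 → Fin 2 → ℝ => G (Matrix.of m) with hg
  have hNs : N.IsSymm := by
    have := hN.1
    rwa [Matrix.IsHermitian, Matrix.conjTranspose_eq_transpose_of_trivial] at this
  have hd : HasDerivAt (fun t : ℝ => g (Matrix.of.symm S + t • Matrix.of.symm N))
      (fderiv ℝ g (Matrix.of.symm S) (Matrix.of.symm N)) 0 := by
    have h1 : HasFDerivAt g (fderiv ℝ g (Matrix.of.symm S))
        (Matrix.of.symm S + (0 : ℝ) • Matrix.of.symm N) := by
      rw [zero_smul, add_zero]
      exact (hG.differentiable two_ne_zero _).hasFDerivAt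
    have h2 : HasDerivAt (fun t : ℝ => Matrix.of.symm S + t • Matrix.of.symm N)
        (Matrix.of.symm N) 0 := by
      simpa using ((hasDerivAt_id (0 : ℝ)).smul_const (Matrix.of.symm N)).const_add
        (Matrix.of.symm S)
    exact h1.comp_hasDerivAt 0 h2
  have hstep : ∀ s t : ℝ, s ≤ t →
      lam * (N.trace * (t - s)) ≤ g (Matrix.of.symm S + t • Matrix.of.symm N)
        - g (Matrix.of.symm S + s • Matrix.of.symm N) ∧
      g (Matrix.of.symm S + t • Matrix.of.symm N)
        - g (Matrix.of.symm S + s • Matrix.of.symm N) ≤ Lam * (N.trace * (t - s)) := by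
    intro s t hst
    have h := hell (S + s • N) ((t - s) • N) (hS.add (hNs.smul s))
      (hN.smul (sub_nonneg.2 hst))
    have e : S + s • N + (t - s) • N = S + t • N := by
      rw [sub_smul]; abel
    rw [e, Matrix.trace_smul, smul_eq_mul, mul_comm (t - s)] at h
    exact h
  constructor
  · have hm : Monotone (fun t : ℝ => g (Matrix.of.symm S + t • Matrix.of.symm N)
        - lam * N.trace * t) := by
      intro s t hst
      have := (hstep s t hst).1
      simp only
      linarith
    have h3 := hd.sub ((hasDerivAt_id (0 : ℝ)).const_mul (lam * N.trace))
    have h4 := hm.deriv_nonneg (x := 0)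
    have h5 := h3.deriv
    simp only [id, mul_one] at h5
    change deriv (fun t : ℝ => g (Matrix.of.symm S + t • Matrix.of.symm N)
        - lam * N.trace * t) 0 = _ at h5
    linarith
  · have hm : Monotone (fun t : ℝ => Lam * N.trace * t
        - g (Matrix.of.symm S + t • Matrix.of.symm N)) := by
      intro s t hst
      have := (hstep s t hst).2
      simp only
      linarith
    have h3 := ((hasDerivAt_id (0 : ℝ)).const_mul (Lam * N.trace)).sub hd
    have h4 := hm.deriv_nonneg (x := 0)
    have h5 := h3.deriv
    simp only [id, mul_one] at h5
    change deriv (fun t : ℝ => Lam * N.trace * t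
        - g (Matrix.of.symm S + t • Matrix.of.symm N)) 0 = _ at h5
    linarith

/-- The algebra turning a differentiated elliptic equation into a quasiregularity inequality. The
ellipticity is tested on the vectors `(v11, v12)` and `(v12, v22)`; the sum of the two quadratic forms
is `(v11 + v22) * F - (a + c) * det`. -/
lemma quasiregular_algebra {lam Lam a b c v11 v12 v22 F : ℝ} (hlam : 0 < lam)
    (h : ∀ x y : ℝ, lam * (x ^ 2 + y ^ 2) ≤ a * x ^ 2 + 2 * b * (x * y) + c * y ^ 2 ∧
      a * x ^ 2 + 2 * b * (x * y) + c * y ^ 2 ≤ Lam * (x ^ 2 + y ^ 2))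
    (hF : F = a * v11 + 2 * b * v12 + c * v22) :
    v11 ^ 2 + v12 ^ 2 + v12 ^ 2 + v22 ^ 2
      ≤ 4 * Lam / lam * (-(v11 * v22 - v12 * v12)) + 2 * Lam / lam ^ 3 * F ^ 2 := by
  have ha := h 1 0
  have hc := h 0 1
  have h1 := (h v11 v12).1
  have h2 := (h v12 v22).1
  norm_num at ha hc
  set X := v11 ^ 2 + v12 ^ 2 + v12 ^ 2 + v22 ^ 2 with hX
  set J := v11 * v22 - v12 * v12 with hJ
  have h3 : lam * X ≤ (v11 + v22) * F + (a + c) * (-J) := by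
    rw [hX, hJ, hF]; linarith
  have h4 : (v11 + v22) * F ≤ lam * X / 2 + F ^ 2 / lam := by
    have e : lam * X / 2 + F ^ 2 / lam - (v11 + v22) * F
        = lam * ((v11 + v22) / 2 - F / lam) ^ 2 + lam * ((v11 - v22) ^ 2 / 4 + v12 ^ 2) := by
      rw [hX]; field_simp; ring
    have : 0 ≤ lam * ((v11 + v22) / 2 - F / lam) ^ 2 + lam * ((v11 - v22) ^ 2 / 4 + v12 ^ 2) := by
      positivity
    linarith
  have hT1 : 2 * lam ≤ a + c := by linarith
  have hT2 : a + c ≤ 2 * Lam := by linarith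
  have hT : 0 < a + c := by linarith
  have hLam : 0 < Lam := by linarith
  have hX0 : 0 ≤ X := by positivity
  have h5 : (lam * X / 2 - F ^ 2 / lam) / (a + c) ≤ -J := by
    rw [div_le_iff₀ hT]; linarith
  have h6 : 4 * Lam / lam * ((lam * X / 2 - F ^ 2 / lam) / (a + c)) ≤ 4 * Lam / lam * (-J) := by
    gcongr
  have e : 4 * Lam / lam * ((lam * X / 2 - F ^ 2 / lam) / (a + c))
      = 2 * Lam / (a + c) * X - 4 * Lam / (lam ^ 2 * (a + c)) * F ^ 2 := by
    field_simp
    ring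
  have h7 : 1 * X ≤ 2 * Lam / (a + c) * X := by
    gcongr
    rwa [one_le_div hT]
  have h8 : 4 * Lam / (lam ^ 2 * (a + c)) * F ^ 2 ≤ 2 * Lam / lam ^ 3 * F ^ 2 := by
    gcongr ?_ * _
    rw [div_le_div_iff₀ (by positivity) (by positivity)]
    have : 0 ≤ 2 * Lam * lam ^ 2 * (a + c - 2 * lam) :=
      mul_nonneg (by positivity) (by linarith)
    linarith
  linarith

/-- Differentiating `G (D²v) = F` in the direction `k`, the `k`-th row of the Hessian satisfies a
quasiregularity inequality with an error controlled by the derivative of `F`. -/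
lemma hess_row_quasiregular {lam Lam : ℝ} (hlam : 0 < lam) {G : Matrix (Fin 2) (Fin 2) ℝ → ℝ}
    (hG : ContDiff ℝ 2 (fun m : Fin 2 → Fin 2 → ℝ => G (Matrix.of m)))
    (hell : ∀ S N : Matrix (Fin 2) (Fin 2) ℝ, S.IsSymm → N.PosSemidef →
      lam * N.trace ≤ G (S + N) - G S ∧ G (S + N) - G S ≤ Lam * N.trace)
    {v : E2 → ℝ} (hv : ContDiff ℝ 4 v) (x : E2) (k : Fin 2) :
    energy (fun z => Hess v z k 0) (fun z => Hess v z k 1) x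
      ≤ 4 * Lam / lam * (-jac (fun z => Hess v z k 0) (fun z => Hess v z k 1) x)
        + 2 * Lam / lam ^ 3 * (fderiv ℝ (fun z => G (Hess v z)) x (ev k)) ^ 2 := by
  have h2 : ContDiff ℝ 2 v := hv.of_le (by norm_num)
  set g := fun m : Fin 2 → Fin 2 → ℝ => G (Matrix.of m) with hg
  set m₀ : Fin 2 → Fin 2 → ℝ := Matrix.of.symm (Hess v x) with hm₀
  set L := fderiv ℝ g m₀ with hL
  have hd : HasFDerivAt (fun z => (Matrix.of.symm (Hess v z) : Fin 2 → Fin 2 → ℝ))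
      (ContinuousLinearMap.pi fun i => ContinuousLinearMap.pi fun j =>
        fderiv ℝ (fun z => Hess v z i j) x) x := by
    rw [hasFDerivAt_pi]
    intro i
    rw [hasFDerivAt_pi]
    intro j
    exact ((contDiff_hess hv i j).differentiable two_ne_zero x).hasFDerivAt
  have hF : fderiv ℝ (fun z => G (Hess v z)) x (ev k)
      = L (fun i j => fderiv ℝ (fun z => Hess v z i j) x (ev k)) := by
    have h1 : HasFDerivAt g L (Matrix.of.symm (Hess v x)) :=
      (hG.differentiable two_ne_zero _).hasFDerivAt
    have h3 := (h1.comp x hd).fderiv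
    change fderiv ℝ (fun z => G (Hess v z)) x = _ at h3
    rw [h3]
    rfl
  have hsw : ∀ i j, fderiv ℝ (fun z => Hess v z k j) x (ev i)
      = fderiv ℝ (fun z => Hess v z k i) x (ev j) := by
    intro i j
    rw [fderiv_hess_comm hv x k j i, fderiv_hess_comm hv x k i j]
    congr 3
    funext z
    exact hess_symm h2 z i j
  set w : Fin 2 → Fin 2 → ℝ := fun i j => fderiv ℝ (fun z => Hess v z k j) x (ev i) with hw
  have hw' : (fun i j => fderiv ℝ (fun z => Hess v z i j) x (ev k)) = w := by
    funext i j
    exact fderiv_hess_comm hv x i j k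
  set e1 : Fin 2 → Fin 2 → ℝ := ![![1, 0], ![0, 0]] with he1
  set e2 : Fin 2 → Fin 2 → ℝ := ![![0, 1], ![1, 0]] with he2
  set e3 : Fin 2 → Fin 2 → ℝ := ![![0, 0], ![0, 1]] with he3
  have hdec : w = w 0 0 • e1 + w 0 1 • e2 + w 1 1 • e3 := by
    have h10 : w 1 0 = w 0 1 := hsw 1 0
    funext i j
    fin_cases i <;> fin_cases j <;> simp [he1, he2, he3, h10]
  have key := quasiregular_algebra (lam := lam) (Lam := Lam) (a := L e1) (b := L e2 / 2)
    (c := L e3) (v11 := w 0 0) (v12 := w 0 1) (v22 := w 1 1) (F := L w) hlam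
    (by
      intro a b
      have hN := Matrix.posSemidef_vecMulVec_self_star (R := ℝ) ![a, b]
      have hS : (Hess v x).IsSymm := by
        ext i j
        exact hess_symm h2 x j i
      have h := ellipticity_deriv hG hell hS _ hN
      have hdecN : (Matrix.of.symm (Matrix.vecMulVec ![a, b] (star ![a, b])) :
          Fin 2 → Fin 2 → ℝ) = a ^ 2 • e1 + (a * b) • e2 + b ^ 2 • e3 := by
        change (fun i j => ![a, b] i * ![a, b] j) = _
        funext i j
        fin_cases i <;> fin_cases j <;> simp [he1, he2, he3] <;> ring
      have htr : (Matrix.vecMulVec ![a, b] (star ![a, b])).trace = a ^ 2 + b ^ 2 := by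
        simp [Matrix.trace, Fin.sum_univ_two, Matrix.vecMulVec]; ring
      rw [hdecN, htr, map_add, map_add, map_smul, map_smul, map_smul] at h
      simp only [smul_eq_mul] at h
      constructor <;> linarith [h.1, h.2])
    (by
      conv_lhs => rw [hdec]
      rw [map_add, map_add, map_smul, map_smul, map_smul]
      simp only [smul_eq_mul]
      ring)
  rw [hF, hw']
  have h10 : w 1 0 = w 0 1 := hsw 1 0
  have hen : energy (fun z => Hess v z k 0) (fun z => Hess v z k 1) x
      = w 0 0 ^ 2 + w 0 1 ^ 2 + w 0 1 ^ 2 + w 1 1 ^ 2 := by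
    change w 0 0 ^ 2 + w 1 0 ^ 2 + w 0 1 ^ 2 + w 1 1 ^ 2 = _
    rw [h10]
  have hja : jac (fun z => Hess v z k 0) (fun z => Hess v z k 1) x
      = w 0 0 * w 1 1 - w 0 1 * w 0 1 := by
    change w 0 0 * w 1 1 - w 1 0 * w 0 1 = _
    rw [h10]
  rw [hen, hja]
  exact key

/-! ### Quadratic expansion along rays -/

/-- Integrating a power bound of a derivative. -/
lemma abs_le_rpow_of_deriv {φ φ' : ℝ → ℝ} {R B s : ℝ} (hR : 1 ≤ R) (hs : 0 < s)
    (h : ∀ t, R ≤ t → HasDerivAt φ (φ' t) t) (h0 : |φ R| ≤ B)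
    (h1 : ∀ t, R ≤ t → |φ' t| ≤ B * (s * t ^ (s - 1))) :
    ∀ t, R ≤ t → |φ t| ≤ B * t ^ s := by
  intro t ht
  have hB : 0 ≤ B := (abs_nonneg _).trans h0
  have hRs : 1 ≤ R ^ s := one_le_rpow hR hs.le
  have hBR : B ≤ B * R ^ s := le_mul_of_one_le_right hB hRs
  have hd : ∀ τ ∈ Set.Icc R t, HasDerivAt (fun τ => B * τ ^ s) (B * (s * τ ^ (s - 1))) τ :=
    fun τ hτ => (hasDerivAt_rpow_const (Or.inl (by linarith [hτ.1]))).const_mul B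
  have u1 : B * R ^ s - φ R ≤ B * t ^ s - φ t := le_of_hasDerivAt_nonneg ht
    (F := fun τ => B * τ ^ s - φ τ)
    (fun τ hτ => (hd τ hτ).sub (h τ hτ.1))
    (fun τ hτ => by linarith [(abs_le.1 (h1 τ hτ.1)).2])
  have u2 : B * R ^ s + φ R ≤ B * t ^ s + φ t := le_of_hasDerivAt_nonneg ht
    (F := fun τ => B * τ ^ s + φ τ)
    (fun τ hτ => (hd τ hτ).add (h τ hτ.1))
    (fun τ hτ => by linarith [(abs_le.1 (h1 τ hτ.1)).1])
  have h2 := abs_le.1 h0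
  rw [abs_le]
  constructor <;> linarith [h2.1, h2.2]

lemma quadForm_smul (A : Matrix (Fin 2) (Fin 2) ℝ) (t : ℝ) (x : E2) :
    quadForm A (t • x) = t ^ 2 * quadForm A x := by
  simp only [quadForm, Fin.sum_univ_two, PiLp.smul_apply, smul_eq_mul]
  ring

/-- The second derivative in the direction `ω` is the quadratic form of the Hessian at `ω`. -/
lemma fderiv_fderiv_eq_quadForm {v : E2 → ℝ} (hv : ContDiff ℝ 2 v) (y ω : E2) :
    fderiv ℝ (fun z => fderiv ℝ v z ω) y ω = quadForm (Hess v y) ω := by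
  have hd : DifferentiableAt ℝ (fderiv ℝ v) y :=
    (hv.fderiv_right (m := 1) (by norm_num)).differentiable one_ne_zero y
  have h1 : ∀ a b, fderiv ℝ (fun z => fderiv ℝ v z a) y b = fderiv ℝ (fderiv ℝ v) y b a := by
    intro a b
    have := (hd.hasFDerivAt.clm_apply (hasFDerivAt_const a y)).fderiv
    rw [this]
    simp
  simp only [quadForm, Fin.sum_univ_two, hess_apply hv, h1]
  conv_lhs => rw [E2_eq ω]
  simp only [map_add, map_smul, smul_eq_mul, _root_.add_apply, _root_.smul_apply]
  ring

lemma abs_apply_le_norm (x : E2) (i : Fin 2) : |x i| ≤ ‖x‖ := by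
  simpa using PiLp.norm_apply_le x i

/-- Convergence of the Hessian with a power rate is integrated twice along rays. The exponent of the
first integration is `1 - ε > 0`, so the contributions of the sphere of radius `R` are absorbed. -/
lemma quadratic_expansion {v : E2 → ℝ} (hv : ContDiff ℝ 2 v) {A : Matrix (Fin 2) (Fin 2) ℝ}
    {R C ε : ℝ} (hR : 1 ≤ R) (hC : 0 < C) (hε1 : ε < 1)
    (h : ∀ x : E2, R ≤ ‖x‖ → ∀ i j, |Hess v x i j - A i j| ≤ C * ‖x‖ ^ (-ε)) :
    ∃ C' > 0, ∀ x : E2, R ≤ ‖x‖ → |v x - quadForm A x / 2| ≤ C' * ‖x‖ ^ (2 - ε) := by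
  have hcA : Continuous (quadForm A) := by
    unfold quadForm; fun_prop
  have hcv := hv.continuous
  have hcdv := hv.continuous_fderiv two_ne_zero
  obtain ⟨B₀, hB₀⟩ := (isCompact_sphere (0 : E2) 1).exists_bound_of_continuousOn
    (f := fun ω => v (R • ω) - R ^ 2 * (quadForm A ω / 2)) (by fun_prop)
  obtain ⟨B₁, hB₁⟩ := (isCompact_sphere (0 : E2) 1).exists_bound_of_continuousOn
    (f := fun ω => fderiv ℝ v (R • ω) ω - R * quadForm A ω)
    (by
      apply Continuous.continuousOn
      exact ((hcdv.comp (continuous_const_smul R)).clm_apply continuous_id).sub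
        (continuous_const.mul hcA))
  set B := max B₁ 0 + 4 * C / (1 - ε) with hB
  have hε' : 0 < 1 - ε := by linarith
  have hBpos : 0 < B := by
    have : 0 < 4 * C / (1 - ε) := by positivity
    have := le_max_right B₁ 0
    linarith
  refine ⟨max B₀ 0 + B, by have := le_max_right B₀ 0; linarith, fun x hx => ?_⟩
  have hx0 : 0 < ‖x‖ := by linarith
  set ω : E2 := ‖x‖⁻¹ • x with hω
  have hω1 : ‖ω‖ = 1 := by
    rw [hω, norm_smul, norm_inv, norm_norm, inv_mul_cancel₀ hx0.ne']
  have hωs : ω ∈ Metric.sphere (0 : E2) 1 := by simpa using hω1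
  have hxω : ‖x‖ • ω = x := by
    rw [hω, smul_smul, mul_inv_cancel₀ hx0.ne', one_smul]
  have hray : ∀ t : ℝ, HasDerivAt (fun t : ℝ => t • ω) ω t := fun t => by
    simpa using (hasDerivAt_id t).smul_const ω
  have hd0 : ∀ t : ℝ, HasDerivAt (fun t : ℝ => v (t • ω) - t ^ 2 * (quadForm A ω / 2))
      (fderiv ℝ v (t • ω) ω - t * quadForm A ω) t := by
    intro t
    have h1 := ((hv.differentiable two_ne_zero (t • ω)).hasFDerivAt).comp_hasDerivAt t (hray t)
    have h2 := (hasDerivAt_pow 2 t).mul_const (quadForm A ω / 2)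
    refine (h1.sub h2).congr_deriv ?_
    norm_num
    ring
  have hd1 : ∀ t : ℝ, HasDerivAt (fun t : ℝ => fderiv ℝ v (t • ω) ω - t * quadForm A ω)
      (quadForm (Hess v (t • ω)) ω - quadForm A ω) t := by
    intro t
    have h1 := (((contDiff_fderiv_apply hv ω).differentiable one_ne_zero
      (t • ω)).hasFDerivAt).comp_hasDerivAt t (hray t)
    rw [fderiv_fderiv_eq_quadForm hv] at h1
    have h2 := (hasDerivAt_id t).mul_const (quadForm A ω)
    refine (h1.sub h2).congr_deriv ?_
    simp
  have hbd2 : ∀ t, R ≤ t → |quadForm (Hess v (t • ω)) ω - quadForm A ω|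
      ≤ B * ((1 - ε) * t ^ ((1 - ε) - 1)) := by
    intro t ht
    have ht0 : 0 < t := by linarith
    have hn : ‖t • ω‖ = t := by rw [norm_smul, hω1, mul_one, norm_of_nonneg ht0.le]
    have hH := h (t • ω) (by rw [hn]; exact ht)
    rw [hn] at hH
    have hω' : ∀ i j : Fin 2, |(Hess v (t • ω) i j - A i j) * (ω i * ω j)| ≤ C * t ^ (-ε) := by
      intro i j
      rw [abs_mul, abs_mul]
      have hi := abs_apply_le_norm ω i
      have hj := abs_apply_le_norm ω j
      rw [hω1] at hi hj
      calc _ ≤ C * t ^ (-ε) * (1 * 1) := by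
            gcongr
            exact hH i j
        _ = _ := by ring
    have e : quadForm (Hess v (t • ω)) ω - quadForm A ω
        = (Hess v (t • ω) 0 0 - A 0 0) * (ω 0 * ω 0) + (Hess v (t • ω) 0 1 - A 0 1) * (ω 0 * ω 1)
        + (Hess v (t • ω) 1 0 - A 1 0) * (ω 1 * ω 0)
        + (Hess v (t • ω) 1 1 - A 1 1) * (ω 1 * ω 1) := by
      simp only [quadForm, Fin.sum_univ_two]; ring
    have h4 : |quadForm (Hess v (t • ω)) ω - quadForm A ω| ≤ 4 * C * t ^ (-ε) := by
      rw [e]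
      refine (abs_add_le _ _).trans ?_
      have a1 := abs_add_le ((Hess v (t • ω) 0 0 - A 0 0) * (ω 0 * ω 0)
        + (Hess v (t • ω) 0 1 - A 0 1) * (ω 0 * ω 1)) ((Hess v (t • ω) 1 0 - A 1 0) * (ω 1 * ω 0))
      have a2 := abs_add_le ((Hess v (t • ω) 0 0 - A 0 0) * (ω 0 * ω 0))
        ((Hess v (t • ω) 0 1 - A 0 1) * (ω 0 * ω 1))
      linarith [hω' 0 0, hω' 0 1, hω' 1 0, hω' 1 1]
    refine h4.trans ?_
    rw [show (1 - ε) - 1 = -ε by ring, ← mul_assoc]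
    gcongr ?_ * _
    rw [hB, add_mul, div_mul_cancel₀ _ hε'.ne']
    have : 0 ≤ max B₁ 0 * (1 - ε) := mul_nonneg (le_max_right _ _) hε'.le
    linarith
  have hφ' := abs_le_rpow_of_deriv hR hε' (fun t _ => hd1 t)
    (by
      have := hB₁ ω hωs
      rw [norm_eq_abs] at this
      refine this.trans ((le_max_left B₁ 0).trans ?_)
      have : 0 < 4 * C / (1 - ε) := by positivity
      linarith) hbd2
  have hφ := abs_le_rpow_of_deriv (B := max B₀ 0 + B) (s := 2 - ε) hR (by linarith)
    (fun t _ => hd0 t)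
    (by
      have := hB₀ ω hωs
      rw [norm_eq_abs] at this
      linarith [le_max_left B₀ 0])
    (fun t ht => by
      have ht0 : 0 < t := by linarith
      refine (hφ' t ht).trans ?_
      rw [show 2 - ε - 1 = 1 - ε by ring, ← mul_assoc]
      gcongr
      have : B ≤ max B₀ 0 + B := by linarith [le_max_right B₀ 0]
      nlinarith)
    ‖x‖ hx
  have hq : quadForm A x / 2 = ‖x‖ ^ 2 * (quadForm A ω / 2) := by
    conv_lhs => rw [← hxω, quadForm_smul]
    ring
  rw [hq]
  simpa only [hxω] using hφ

/-! ### The asymptotic expansion -/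

theorem statement11
    (lam Lam M β : ℝ) (hlam : 0 < lam) (hLam : lam ≤ Lam) (hM : 0 < M) (hβ : 0 < β)
    (Ω : Set E2) (hΩo : IsOpen Ω) (hΩb : Bornology.IsBounded Ω)
    (G : Matrix (Fin 2) (Fin 2) ℝ → ℝ)
    (hG : ContDiff ℝ 2 (fun m : Fin 2 → Fin 2 → ℝ => G (Matrix.of m)))
    (hell : ∀ S N : Matrix (Fin 2) (Fin 2) ℝ, S.IsSymm → N.PosSemidef →
      lam * N.trace ≤ G (S + N) - G S ∧ G (S + N) - G S ≤ Lam * N.trace)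
    (u f : E2 → ℝ)
    (hu : ContDiffOn ℝ (⊤ : ℕ∞) u (closure Ω)ᶜ)
    (heq : ∀ x ∈ (closure Ω)ᶜ, G (Hess u x) = f x)
    (hM2 : ∀ x ∈ (closure Ω)ᶜ, ∀ i j : Fin 2, |Hess u x i j| ≤ M)
    (hdecay : DecayCond β u f) :
    ∃ A : Matrix (Fin 2) (Fin 2) ℝ, A.IsSymm ∧ G A = 0 ∧
      ∃ ε ∈ Set.Ioo (0:ℝ) 1, ∃ C > (0:ℝ), ∃ R₀ > (1:ℝ), ∀ x : E2, R₀ ≤ ‖x‖ →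
        (∀ i j : Fin 2, |Hess u x i j - A i j| ≤ C * ‖x‖ ^ (-ε))
        ∧ |u x - quadForm A x / 2| ≤ C * ‖x‖ ^ (2 - ε) := by
  obtain ⟨v, hv, Rv, hRv, hvu⟩ := exists_smooth_extension hΩb hu
  obtain ⟨C₀, hC₀, Rd, hRd, hdec⟩ := decay_lip hβ hdecay
  have hv2 : ContDiff ℝ 2 v := hv.of_le (by norm_num)
  have hLam0 : 0 < Lam := by linarith
  have hHess : ∀ x : E2, Rv ≤ ‖x‖ → Hess u x = Hess v x := fun x hx => hess_congr (hvu x hx).2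
  have hGf : ∀ x : E2, Rv ≤ ‖x‖ → G (Hess v x) = f x := fun x hx => by
    rw [← hHess x hx, heq x (hvu x hx).1]
  set R := Rv + Rd with hR
  obtain ⟨ε, hε, C', hC', R₁, hR₁, H⟩ := pair_limit (M := M) (K := 4 * Lam / lam)
    (C := 2 * Lam / lam ^ 3 * C₀ ^ 2) (β := β) (R₀ := R) hM (by positivity) (by positivity) hβ
    (by linarith)
  have hderiv : ∀ x : E2, R ≤ ‖x‖ → ∀ k,
      fderiv ℝ (fun z => G (Hess v z)) x (ev k) ^ 2 ≤ C₀ ^ 2 * ‖x‖ ^ (-2 * β - 2) := by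
    intro x hx k
    have hx0 : 0 < ‖x‖ := by linarith
    have hopen : IsOpen {y : E2 | Rv < ‖y‖} := isOpen_lt continuous_const continuous_norm
    have h1 : ‖fderiv ℝ (fun z => G (Hess v z)) x‖ ≤ C₀ * ‖x‖ ^ (-β - 1) := by
      refine norm_fderiv_le_of_lip' ℝ (by positivity) ?_
      filter_upwards [hopen.mem_nhds (show Rv < ‖x‖ by linarith),
        Metric.ball_mem_nhds x (show 0 < ‖x‖ / 2 by positivity)] with y hy hyb
      rw [hGf y (le_of_lt hy), hGf x (by linarith), norm_eq_abs]
      exact (hdec x (by linarith)).2 y hyb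
    have h2 : |fderiv ℝ (fun z => G (Hess v z)) x (ev k)| ≤ C₀ * ‖x‖ ^ (-β - 1) := by
      have := (fderiv ℝ (fun z => G (Hess v z)) x).le_opNorm (ev k)
      have hev : ‖ev k‖ = 1 := by simp [ev]
      rw [hev, mul_one, norm_eq_abs] at this
      exact this.trans h1
    calc _ = |fderiv ℝ (fun z => G (Hess v z)) x (ev k)| ^ 2 := (sq_abs _).symm
      _ ≤ (C₀ * ‖x‖ ^ (-β - 1)) ^ 2 := by gcongr
      _ = C₀ ^ 2 * ‖x‖ ^ (-2 * β - 2) := by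
        rw [mul_pow, ← rpow_natCast (‖x‖ ^ (-β - 1)) 2, ← rpow_mul hx0.le]
        congr 2
        push_cast
        ring
  -- the rows of the Hessian have limits at infinity
  have hlim : ∀ i j : Fin 2, ∃ L, ∀ x : E2, R₁ ≤ ‖x‖ → |Hess v x i j - L| ≤ C' * ‖x‖ ^ (-ε) := by
    intro i j
    refine H (fun z => Hess v z i 0) (fun z => Hess v z i 1) (contDiff_hess hv i 0)
      (contDiff_hess hv i 1) (fun y hy => ?_) (fun y hy => ?_) (fun z => Hess v z i j) ?_
    · have hy' : Rv ≤ ‖y‖ := by linarith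
      rw [← hHess y hy']
      exact ⟨hM2 y (hvu y hy').1 i 0, hM2 y (hvu y hy').1 i 1⟩
    · refine (hess_row_quasiregular hlam hG hell hv y i).trans ?_
      have : 2 * Lam / lam ^ 3 * fderiv ℝ (fun z => G (Hess v z)) y (ev i) ^ 2
          ≤ 2 * Lam / lam ^ 3 * (C₀ ^ 2 * ‖y‖ ^ (-2 * β - 2)) := by
        gcongr
        exact hderiv y hy i
      linarith
    · fin_cases j
      exacts [Or.inl rfl, Or.inr rfl]
  choose A hA using hlim
  -- limits along a ray identify the algebraic properties of the limit matrix
  have hn : ∀ t : ℝ, 0 ≤ t → ‖t • ev 0‖ = t := fun t ht => by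
    rw [norm_smul, norm_of_nonneg ht]; simp [ev]
  have htend : ∀ i j, Filter.Tendsto (fun t : ℝ => Hess v (t • ev 0) i j) Filter.atTop
      (nhds (A i j)) := by
    intro i j
    rw [tendsto_iff_norm_sub_tendsto_zero]
    refine squeeze_zero' (Filter.Eventually.of_forall fun _ => norm_nonneg _) ?_
      (by simpa using (tendsto_rpow_neg_atTop hε.1).const_mul C')
    filter_upwards [Filter.eventually_ge_atTop R₁] with t ht
    have := hA i j (t • ev 0) (by rw [hn t (by linarith)]; exact ht)
    rwa [hn t (by linarith)] at this
  have hAsymm : ∀ i j, A i j = A j i := fun i j =>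
    tendsto_nhds_unique (htend i j) (by simpa only [hess_symm hv2 _ i j] using htend j i)
  have hGA : G (Matrix.of A) = 0 := by
    have h1 : Filter.Tendsto (fun t : ℝ => G (Hess v (t • ev 0))) Filter.atTop
        (nhds (G (Matrix.of A))) := by
      have h2 : Filter.Tendsto (fun t : ℝ => (Matrix.of.symm (Hess v (t • ev 0)) :
          Fin 2 → Fin 2 → ℝ)) Filter.atTop (nhds A) := by
        rw [tendsto_pi_nhds]
        intro i
        rw [tendsto_pi_nhds]
        exact htend i
      exact (hG.continuous.tendsto A).comp h2
    refine tendsto_nhds_unique h1 ?_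
    rw [tendsto_zero_iff_norm_tendsto_zero]
    refine squeeze_zero' (Filter.Eventually.of_forall fun _ => norm_nonneg _) ?_
      (by simpa using (tendsto_rpow_neg_atTop hβ).const_mul C₀)
    filter_upwards [Filter.eventually_ge_atTop R] with t ht
    have hnt := hn t (by linarith)
    rw [hGf _ (by rw [hnt]; linarith), norm_eq_abs]
    have := (hdec (t • ev 0) (by rw [hnt]; linarith)).1
    rwa [hnt] at this
  obtain ⟨C₂, hC₂, hexp⟩ := quadratic_expansion hv2 (A := Matrix.of A) hR₁.le hC' hε.2
    (fun x hx i j => hA i j x hx)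
  refine ⟨Matrix.of A, by ext i j; exact hAsymm j i, hGA, ε, hε, max C' C₂,
    lt_max_of_lt_left hC', R₁ + Rv, by linarith, fun x hx => ⟨fun i j => ?_, ?_⟩⟩
  · rw [hHess x (by linarith)]
    refine (hA i j x (by linarith)).trans ?_
    gcongr
    exact le_max_left _ _
  · rw [← (hvu x (by linarith)).2.eq_of_nhds]
    refine (hexp x (by linarith)).trans ?_
    gcongr
    exact le_max_right _ _
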